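/- Let Γ be a finite connected simple graph, v a vertex of Γ of degree d ≥ 2, and m ≥ 1. Let Γ' be the graph obtained from Γ by attaching a path of length m at v, i.e. by adjoining m new vertices w₁, …, w_m and the new edges {v,w₁}, {w₁,w₂}, …, {w_{m−1}, w_m}. Then the graph 2-braid group of Γ' decomposes as a free product: B₂(Γ') is isomorphic to B₂(Γ) ∗ F_{d−1}, where F_{d−1} is the free group of rank d − 1. -/

import Mathlib

/-!
Let `Y` be the realization of `Γ`, and view the realization of `Γ'` as `Y` with a whisker `[0, 1]`
attached at the vertex `v`; a point of it has a projection to `Y` and a height on the whisker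
(`nonempty_homeo_whisker`). The space `X` of unordered pairs of points of the whiskered space is
covered by two open sets.

* `U = spread`: the two points have distinct projections to `Y`. Shrinking the whisker retracts
  `U` by deformation onto the space of pairs of points of `Y`
  (`nonempty_spread_homotopyEquiv`).
* `W = ubelow` of the open star of `v`: the two points have distinct heights, and the lower one
  projects into the open star of `v`. The upper one is then on the whisker; pushing it to the end
  of the whisker while contracting the lower one to `v` contracts `W`
  (`contractibleSpace_below`).

The intersection of `U` and `W` consists of the pairs whose lower point is in the star but not
over `v`: it is the disjoint union of one open contractible set for each of the `d` edges at
`v`. Such a union has fundamental group `π₁(U) ∗ F_{d-1}` (`fundamentalGroup_union`), since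
each intersection after the first one contributes a free generator.

The last fact is the groupoid version of the van Kampen theorem in the case needed here. Its proof
is in terms of holonomies (`HolOn`): group-valued functions of paths which are multiplicative and
homotopy invariant. Holonomies on the members of an open cover which agree on overlaps glue to a
unique holonomy (`exists_glue`, `HolOn.ext_of_cover`). Gluing gives a homomorphism from `π₁(X)` to
the free product, and uniqueness shows that it is inverse to the evident homomorphism in the other
direction.

Moving base points requires the spaces of pairs to be path connected; this is where the degree of
`v` being at least two is used (`pathConnectedSpace_uconf`): two points can then exchange places
at `v`.
-/

open scoped Classical

noncomputable section

namespace GraphBraid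

/-- The standard basis vector `e_v` in `ℝ^V`. -/
def basisVec {V : Type} [DecidableEq V] (v : V) : V → ℝ := fun w => if w = v then 1 else 0

/-- The geometric realization of a simple graph, as the subspace of `ℝ^V` given by the
union over the edges of the straight segments joining the corresponding basis vectors. -/
def realization {V : Type} [DecidableEq V] (G : SimpleGraph V) : Set (V → ℝ) :=
  ⋃ (u : V) (v : V) (_ : G.Adj u v), segment ℝ (basisVec u) (basisVec v)

/-- The realization of a subgraph, as a subspace of `ℝ^V`. -/
def subRealization {V : Type} [DecidableEq V] {G : SimpleGraph V} (H : G.Subgraph) :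
    Set (V → ℝ) :=
  ⋃ (u : V) (v : V) (_ : H.Adj u v), segment ℝ (basisVec u) (basisVec v)

/-- The ordered `n`-point configuration space of a topological space. -/
abbrev Conf (n : ℕ) (X : Type) [TopologicalSpace X] : Type :=
  {f : Fin n → X // Function.Injective f}

/-- Two ordered configurations are related when they differ by a permutation of coordinates. -/
def permRel (n : ℕ) (X : Type) [TopologicalSpace X] (f g : Conf n X) : Prop :=
  ∃ σ : Equiv.Perm (Fin n), (f : Fin n → X) = (g : Fin n → X) ∘ σ

/-- The unordered `n`-point configuration space: the quotient of the ordered configuration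
space by the symmetric group permuting coordinates. -/
abbrev UConf (n : ℕ) (X : Type) [TopologicalSpace X] : Type :=
  Quot (permRel n X)

/-- A group is free when it is isomorphic to `FreeGroup S` for some set `S`. -/
def IsFreeGroupType (G : Type*) [Group G] : Prop :=
  ∃ S : Type, Nonempty (G ≃* FreeGroup S)

/-- A cycle subgraph: a subgraph with at least one edge which is connected and all of whose
vertices have degree exactly two (inside the subgraph). -/
def IsCycleSubgraph {W : Type*} {G : SimpleGraph W} (H : G.Subgraph) : Prop :=
  H.edgeSet.Nonempty ∧ H.Connected ∧ ∀ v ∈ H.verts, (H.neighborSet v).ncard = 2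

/-- The graph obtained from `Γ` by attaching a path of length `m` at the vertex `v`:
adjoin new vertices `w₀, …, w_{m-1}` with edges `{v,w₀}, {w₀,w₁}, …, {w_{m-2},w_{m-1}}`. -/
def attachPath {V : Type} (Γ : SimpleGraph V) (v : V) (m : ℕ) :
    SimpleGraph (V ⊕ Fin m) :=
  SimpleGraph.fromEdgeSet
    ({e | ∃ a b : V, Γ.Adj a b ∧ e = s(Sum.inl a, Sum.inl b)} ∪
     {e | ∃ h : 0 < m, e = s(Sum.inl v, Sum.inr ⟨0, h⟩)} ∪
     {e | ∃ i j : Fin m, (i : ℕ) + 1 = (j : ℕ) ∧ e = s(Sum.inr i, Sum.inr j)})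

/-! ### Group-valued holonomies and their gluing -/

section Holonomy

open unitInterval Set

variable {X : Type*} [TopologicalSpace X] {G : Type*} [Group G]

/-- A `G`-valued holonomy over `U ⊆ X`: a function on paths of `X`, only meaningful on paths that
stay in `U`, which is invariant under homotopies inside `U` and reverses concatenation into
multiplication (this is Mathlib's convention for the multiplication of the fundamental group).
It encodes a functor from the fundamental groupoid of `U` to the one-object groupoid `G`. -/
structure HolOn (U : Set X) (G : Type*) [Group G] where
  /-- The value on a path, with junk values on paths leaving `U`. -/
  toFun : C(I, X) → G
  trans' : ∀ {x y z : X} (p : Path x y) (q : Path y z), (∀ t, p t ∈ U) → (∀ t, q t ∈ U) →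
    toFun (p.trans q).toContinuousMap = toFun q.toContinuousMap * toFun p.toContinuousMap
  hom' : ∀ {x y : X} (p q : Path x y) (F : p.Homotopy q), (∀ t, F t ∈ U) →
    toFun p.toContinuousMap = toFun q.toContinuousMap

/-- In a simply connected test space `D` mapped into `U`, holonomy is multiplicative along triangles. -/
lemma HolOn.tri {U : Set X} (a : HolOn U G) {D : Type*} [TopologicalSpace D]
    [SimplyConnectedSpace D] (f : C(D, X)) (hf : ∀ d, f d ∈ U) {x y z : D}
    (p : Path x y) (q : Path y z) (r : Path x z) :
    a.toFun (f.comp r.toContinuousMap) =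
      a.toFun (f.comp q.toContinuousMap) * a.toFun (f.comp p.toContinuousMap) := by
  obtain ⟨F⟩ := SimplyConnectedSpace.paths_homotopic r (p.trans q)
  have h1 := a.hom' _ _ (F.map f) (fun t => hf _)
  have h2 := a.trans' (p.map f.continuous) (q.map f.continuous) (fun t => hf _) (fun t => hf _)
  rw [← Path.map_trans] at h2
  exact h1.trans h2

/-- The affine path from `s` to `t` in the unit interval. -/
def seg (s t : I) : Path s t where
  toFun u := ⟨(1 - u) * s + u * t, by
    have := u.2.1; have := u.2.2; have := s.2.1; have := s.2.2; have := t.2.1; have := t.2.2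
    constructor
    · have := sub_nonneg.2 u.2.2; positivity
    · nlinarith⟩
  continuous_toFun := by fun_prop
  source' := by simp
  target' := by simp

lemma seg_coe (s t u : I) : ((seg s t u : I) : ℝ) = (1 - u) * s + u * t := rfl

lemma seg_mem {s t : I} (h : s ≤ t) (u : I) : seg s t u ∈ Icc s t := by
  have h' : (s : ℝ) ≤ t := h
  have := u.2.1; have := u.2.2
  constructor <;> rw [← Subtype.coe_le_coe, seg_coe] <;> nlinarith

lemma seg_comp (s t a b : I) : (seg s t).toContinuousMap.comp (seg a b).toContinuousMap =
    (seg (seg s t a) (seg s t b)).toContinuousMap := by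
  ext u
  simp only [ContinuousMap.comp_apply, Path.coe_toContinuousMap, seg_coe]
  ring

lemma seg_congr {s s' t t' : I} (hs : s = s') (ht : t = t') :
    (seg s t).toContinuousMap = (seg s' t').toContinuousMap := by
  subst hs ht; rfl

lemma seg_zero_one : (seg 0 1).toContinuousMap = ContinuousMap.id I := by
  ext u; simp [seg_coe]

lemma exists_seg {s t u : I} (h1 : s ≤ t) (h2 : t ≤ u) : ∃ r, seg s u r = t := by
  rcases eq_or_lt_of_le (h1.trans h2) with h | h
  · subst h
    exact ⟨0, by rw [Path.source]; exact le_antisymm h1 h2⟩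
  · have h' : (0 : ℝ) < u - s := sub_pos.2 h
    have h1' : (s : ℝ) ≤ t := h1
    have h2' : (t : ℝ) ≤ u := h2
    refine ⟨⟨(t - s) / (u - s), div_nonneg (by linarith) h'.le, ?_⟩, ?_⟩
    · rw [div_le_one h']; linarith
    · ext; rw [seg_coe]; field_simp; ring

instance : ContractibleSpace I := (convex_Icc (0 : ℝ) 1).contractibleSpace ⟨0, by simp⟩

lemma HolOn.seg_add {U : Set X} (a : HolOn U G) (f : C(I, X)) {s t u : I} (h1 : s ≤ t)
    (h2 : t ≤ u) (h : ∀ r ∈ Icc s u, f r ∈ U) :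
    a.toFun (f.comp (seg s u).toContinuousMap) =
      a.toFun (f.comp (seg t u).toContinuousMap) * a.toFun (f.comp (seg s t).toContinuousMap) := by
  obtain ⟨r, hr⟩ := exists_seg h1 h2
  have := a.tri (f.comp (seg s u).toContinuousMap) (fun d => h _ (seg_mem (h1.trans h2) d))
    (seg 0 r) (seg r 1) (seg 0 1)
  simp only [ContinuousMap.comp_assoc, seg_comp] at this
  rwa [seg_congr (seg s u).source (seg s u).target, seg_congr hr (seg s u).target,
    seg_congr (seg s u).source hr] at this

lemma HolOn.seg_self {U : Set X} (a : HolOn U G) (f : C(I, X)) {s : I} (h : f s ∈ U) :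
    a.toFun (f.comp (seg s s).toContinuousMap) = 1 := by
  have := a.seg_add f (le_refl s) (le_refl s) (by simpa using h)
  simpa using this

variable {ι : Type*} {U : ι → Set X}

/-- `g` is a lift of the path `f`: a function on the interval whose increments are the
local holonomies of `f`. -/
def IsLift (a : ∀ i, HolOn (U i) G) (f : C(I, X)) (g : I → G) : Prop :=
  ∀ i s t, s ≤ t → (∀ r ∈ Icc s t, f r ∈ U i) →
    (a i).toFun (f.comp (seg s t).toContinuousMap) = g t * (g s)⁻¹

/-- The total increment of a lift does not depend on the lift. -/
lemma IsLift.unique {a : ∀ i, HolOn (U i) G} (hU : ∀ i, IsOpen (U i)) (hc : ⋃ i, U i = univ)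
    {f : C(I, X)} {g g' : I → G} (h : IsLift a f g) (h' : IsLift a f g') :
    g 1 * (g 0)⁻¹ = g' 1 * (g' 0)⁻¹ := by
  obtain ⟨t, h0, hm, ⟨n, hn⟩, hi⟩ := exists_monotone_Icc_subset_open_cover_unitInterval
    (c := fun i => f ⁻¹' U i) (fun i => (hU i).preimage f.continuous)
    (by rw [← preimage_iUnion, hc, preimage_univ])
  have key : ∀ k, g (t k) * (g 0)⁻¹ = g' (t k) * (g' 0)⁻¹ := by
    intro k
    induction k with
    | zero => simp [h0]
    | succ k ih =>
      obtain ⟨i, hi⟩ := hi k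
      have e1 := h i (t k) (t (k+1)) (hm (Nat.le_succ k)) hi
      have e2 := h' i (t k) (t (k+1)) (hm (Nat.le_succ k)) hi
      have e3 := e1.symm.trans e2
      calc g (t (k+1)) * (g 0)⁻¹ = (g (t (k+1)) * (g (t k))⁻¹) * (g (t k) * (g 0)⁻¹) := by group
        _ = (g' (t (k+1)) * (g' (t k))⁻¹) * (g' (t k) * (g' 0)⁻¹) := by rw [e3, ih]
        _ = _ := by group
  simpa [hn n le_rfl] using key n

/-- Holonomies agreeing on paths inside overlaps. -/
def Agree (a : ∀ i, HolOn (U i) G) : Prop :=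
  ∀ i j (f : C(I, X)), (∀ t, f t ∈ U i) → (∀ t, f t ∈ U j) → (a i).toFun f = (a j).toFun f

/-- Lifts are built by induction over a subdivision of the interval subordinate to the cover. -/
lemma exists_isLift {a : ∀ i, HolOn (U i) G} (ha : Agree a) (hU : ∀ i, IsOpen (U i))
    (hc : ⋃ i, U i = univ) (f : C(I, X)) : ∃ g, IsLift a f g := by
  obtain ⟨t, h0, hm, ⟨n, hn⟩, hi⟩ := exists_monotone_Icc_subset_open_cover_unitInterval
    (c := fun i => f ⁻¹' U i) (fun i => (hU i).preimage f.continuous)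
    (by rw [← preimage_iUnion, hc, preimage_univ])
  have key : ∀ k, ∃ g : I → G, ∀ i s u, s ≤ u → u ≤ t k → (∀ r ∈ Icc s u, f r ∈ U i) →
      (a i).toFun (f.comp (seg s u).toContinuousMap) = g u * (g s)⁻¹ := by
    intro k
    induction k with
    | zero =>
      refine ⟨fun _ => 1, fun i s u hs hu h => ?_⟩
      have hu0 : u = 0 := le_antisymm (h0 ▸ hu) u.2.1
      have hs0 : s = 0 := le_antisymm (hu0 ▸ hs) s.2.1
      subst hu0 hs0
      simpa using (a i).seg_self f (h 0 (by simp))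
    | succ k ih =>
      obtain ⟨g, hg⟩ := ih
      obtain ⟨j, hj⟩ := hi k
      have hj' : ∀ r, t k ≤ r → r ≤ t (k+1) → f r ∈ U j := fun r h1 h2 => hj ⟨h1, h2⟩
      -- beyond `t k` the lift continues with the holonomy of a set `U j` containing the piece
      let g' : I → G := fun u => if u ≤ t k then g u else
        (a j).toFun (f.comp (seg (t k) u).toContinuousMap) * g (t k)
      have hg'1 : ∀ u, u ≤ t k → g' u = g u := fun u hu => if_pos hu
      have hg'2 : ∀ u, t k ≤ u → u ≤ t (k+1) →
          g' u = (a j).toFun (f.comp (seg (t k) u).toContinuousMap) * g (t k) := by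
        intro u hu hu'
        rcases eq_or_lt_of_le hu with h | h
        · rw [← h, hg'1 _ le_rfl, (a j).seg_self f (hj' _ le_rfl (hm (Nat.le_succ k))), one_mul]
        · exact if_neg (not_le.2 h)
      have hag : ∀ i s u, s ≤ u → (∀ r ∈ Icc s u, f r ∈ U i) → (∀ r ∈ Icc s u, f r ∈ U j) →
          (a i).toFun (f.comp (seg s u).toContinuousMap) =
          (a j).toFun (f.comp (seg s u).toContinuousMap) := fun i s u hs h1 h2 =>
        ha i j _ (fun r => h1 _ (seg_mem hs r)) (fun r => h2 _ (seg_mem hs r))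
      refine ⟨g', fun i s u hs hu h => ?_⟩
      rcases le_total u (t k) with h1 | h1
      · rw [hg'1 _ h1, hg'1 _ (hs.trans h1)]
        exact hg i s u hs h1 h
      · rcases le_total s (t k) with h2 | h2
        · rw [hg'1 _ h2, hg'2 _ h1 hu, (a i).seg_add f h2 h1 h,
            hg i s _ h2 le_rfl (fun r hr => h r ⟨hr.1, hr.2.trans h1⟩),
            hag i (t k) u h1 (fun r hr => h r ⟨h2.trans hr.1, hr.2⟩)
              (fun r hr => hj' r hr.1 (hr.2.trans hu))]
          group
        · rw [hg'2 _ h2 (hs.trans hu), hg'2 _ h1 hu, hag i s u hs h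
            (fun r hr => hj' r (h2.trans hr.1) (hr.2.trans hu)),
            (a j).seg_add f h2 hs (fun r hr => hj' r hr.1 (hr.2.trans hu))]
          group
  obtain ⟨g, hg⟩ := key n
  exact ⟨g, fun i s u hs h => hg i s u hs (by rw [hn n le_rfl]; exact u.2.2) h⟩

lemma IsLift.comp_seg {a : ∀ i, HolOn (U i) G} {f : C(I, X)} {g : I → G} (h : IsLift a f g)
    {s t : I} (hst : s ≤ t) : IsLift a (f.comp (seg s t).toContinuousMap) (g ∘ seg s t) := by
  intro i u v huv hr
  rw [ContinuousMap.comp_assoc, seg_comp]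
  have hmono : seg s t u ≤ seg s t v := by
    rw [← Subtype.coe_le_coe, seg_coe, seg_coe]
    have h1 : (s : ℝ) ≤ t := hst
    have h2 : (u : ℝ) ≤ v := huv
    nlinarith
  refine h i _ _ hmono fun r hr' => ?_
  obtain ⟨w, hw⟩ := exists_seg hr'.1 hr'.2
  have := hr (seg u v w) (seg_mem huv w)
  have e := congrArg (fun c => c w) (seg_comp s t u v)
  simp only [ContinuousMap.comp_apply, Path.coe_toContinuousMap] at e this
  rwa [e, hw] at this

/-- Existence half of the van Kampen theorem: holonomies on the members of an open cover which
agree on overlaps glue to a holonomy on the whole space. -/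
theorem exists_glue (a : ∀ i, HolOn (U i) G) (ha : Agree a) (hU : ∀ i, IsOpen (U i))
    (hc : ⋃ i, U i = univ) :
    ∃ c : HolOn (univ : Set X) G, ∀ i (f : C(I, X)), (∀ t, f t ∈ U i) →
      c.toFun f = (a i).toFun f := by
  choose g hg using exists_isLift ha hU hc
  refine ⟨⟨fun f => g f 1 * (g f 0)⁻¹, ?_, ?_⟩, ?_⟩
  · intro x y z p q _ _
    let hf : I := ⟨1/2, by norm_num, by norm_num⟩
    have hp : p.toContinuousMap = (p.trans q).toContinuousMap.comp (seg 0 hf).toContinuousMap := by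
      ext u
      have hu : ((seg 0 hf u : I) : ℝ) = u / 2 := by simp [seg_coe, hf]; ring
      have : ((seg 0 hf u : I) : ℝ) ≤ 1/2 := by rw [hu]; linarith [u.2.2]
      simp only [ContinuousMap.comp_apply, Path.coe_toContinuousMap]
      rw [Path.trans_apply, dif_pos this]
      congr 1; ext; simp only [hu]; ring
    have hq : q.toContinuousMap = (p.trans q).toContinuousMap.comp (seg hf 1).toContinuousMap := by
      ext u
      have hu : ((seg hf 1 u : I) : ℝ) = (1 + u) / 2 := by simp [seg_coe, hf]; ring
      simp only [ContinuousMap.comp_apply, Path.coe_toContinuousMap]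
      rw [Path.trans_apply]
      split_ifs with h
      · have hu0 : u = 0 := by
          rw [hu] at h
          exact Subtype.ext (le_antisymm (by simpa using (by linarith : (u : ℝ) ≤ 0)) u.2.1)
        subst hu0
        have : (⟨2 * ((seg hf 1 0 : I) : ℝ), (unitInterval.mul_pos_mem_iff zero_lt_two).2
          ⟨(seg hf 1 0).2.1, h⟩⟩ : I) = 1 := by ext; simp [hf]
        rw [this]; simp
      · congr 1; ext; simp [hu]; ring
    have e := hg (p.trans q).toContinuousMap
    have e1 := IsLift.unique hU hc (hg p.toContinuousMap)
      (hp ▸ e.comp_seg (s := 0) (t := hf) hf.2.1)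
    have e2 := IsLift.unique hU hc (hg q.toContinuousMap)
      (hq ▸ e.comp_seg (s := hf) (t := 1) hf.2.2)
    rw [e1, e2]
    simp only [Function.comp, Path.source, Path.target]
    group
  · intro x y p q F _
    -- compare neighbouring rows of a fine grid on the square of the homotopy
    let row : I → C(I, X) := fun s => F.toContinuousMap.comp
      ((ContinuousMap.const I s).prodMk (ContinuousMap.id I))
    let col : I → C(I, X) := fun t => F.toContinuousMap.comp
      ((ContinuousMap.id I).prodMk (ContinuousMap.const I t))
    obtain ⟨t, h0, hm, ⟨n, hn⟩, hi⟩ := exists_monotone_Icc_subset_open_cover_unitInterval_prod_self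
      (c := fun i => F ⁻¹' U i) (fun i => (hU i).preimage F.continuous)
      (by rw [← preimage_iUnion, hc, preimage_univ])
    have key : ∀ k, g (row (t k)) 1 * (g (row (t k)) 0)⁻¹ =
        g (row (t (k+1))) 1 * (g (row (t (k+1))) 0)⁻¹ := by
      intro k
      have hk : t k ≤ t (k+1) := hm (Nat.le_succ k)
      -- the vertical edge at height `t l` of the strip
      let vert : ℕ → C(I, X) := fun l => (col (t l)).comp (seg (t k) (t (k+1))).toContinuousMap
      have step : ∀ l i, Icc (t k) (t (k+1)) ×ˢ Icc (t l) (t (l+1)) ⊆ F ⁻¹' U i →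
          (a i).toFun (vert (l+1)) *
            (g (row (t k)) (t (l+1)) * (g (row (t k)) (t l))⁻¹) =
          (g (row (t (k+1))) (t (l+1)) * (g (row (t (k+1))) (t l))⁻¹) *
            (a i).toFun (vert l) := by
        intro l i hi
        have hl : t l ≤ t (l+1) := hm (Nat.le_succ l)
        let Q : C(I × I, X) := F.toContinuousMap.comp
          ((seg (t k) (t (k+1))).toContinuousMap.prodMap (seg (t l) (t (l+1))).toContinuousMap)
        have hQ : ∀ d, Q d ∈ U i := fun d => hi ⟨seg_mem hk _, seg_mem hl _⟩
        let bot : Path ((0 : I), (0 : I)) (0, 1) := (Path.refl 0).prod (seg 0 1)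
        let top : Path ((1 : I), (0 : I)) (1, 1) := (Path.refl 1).prod (seg 0 1)
        let lft : Path ((0 : I), (0 : I)) (1, 0) := (seg 0 1).prod (Path.refl 0)
        let rgt : Path ((0 : I), (1 : I)) (1, 1) := (seg 0 1).prod (Path.refl 1)
        have e1 := (a i).tri Q hQ bot rgt (bot.trans rgt)
        have e2 := (a i).tri Q hQ lft top (bot.trans rgt)
        have hid : ∀ u, seg 0 1 u = u := fun u => congrArg (fun c => c u) seg_zero_one
        have hb : Q.comp bot.toContinuousMap =
            (row (t k)).comp (seg (t l) (t (l+1))).toContinuousMap := by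
          ext u; simp [Q, row, bot, hid]
        have ht : Q.comp top.toContinuousMap =
            (row (t (k+1))).comp (seg (t l) (t (l+1))).toContinuousMap := by
          ext u; simp [Q, row, top, hid]
        have hlf : Q.comp lft.toContinuousMap = vert l := by
          ext u; simp [Q, vert, col, lft, hid]
        have hrt : Q.comp rgt.toContinuousMap = vert (l+1) := by
          ext u; simp [Q, vert, col, rgt, hid]
        rw [hb, hrt] at e1
        rw [ht, hlf] at e2
        rw [hg (row (t k)) i _ _ hl (fun r hr => hi ⟨⟨le_rfl, hk⟩, hr⟩)] at e1
        rw [hg (row (t (k+1))) i _ _ hl (fun r hr => hi ⟨⟨hk, le_rfl⟩, hr⟩)] at e2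
        rw [← e1, ← e2]
      -- the holonomy of a vertical edge does not depend on the chosen member of the cover
      choose i hi using fun l => hi k l
      have hvert : ∀ l j, (∀ r ∈ Icc (t k) (t (k+1)), F (r, t l) ∈ U j) →
          (a (i l)).toFun (vert l) = (a j).toFun (vert l) := by
        intro l j h
        refine ha _ _ _ (fun r => ?_) (fun r => h _ (seg_mem hk r))
        exact hi l ⟨seg_mem hk r, le_rfl, hm (Nat.le_succ l)⟩
      have tele : ∀ l, (a (i l)).toFun (vert l) *
            (g (row (t k)) (t l) * (g (row (t k)) 0)⁻¹) =
          (g (row (t (k+1))) (t l) * (g (row (t (k+1))) 0)⁻¹) *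
            (a (i 0)).toFun (vert 0) := by
        intro l
        induction l with
        | zero => simp [h0]
        | succ l ih =>
          rw [hvert (l+1) (i l) (fun r hr => hi l ⟨hr, hm (Nat.le_succ l), le_rfl⟩)]
          have s := step l (i l) (hi l)
          calc _ = ((a (i l)).toFun (vert (l+1)) *
                (g (row (t k)) (t (l+1)) * (g (row (t k)) (t l))⁻¹)) *
                (g (row (t k)) (t l) * (g (row (t k)) 0)⁻¹) := by group
            _ = (g (row (t (k+1))) (t (l+1)) * (g (row (t (k+1))) (t l))⁻¹) *
                ((a (i l)).toFun (vert l) * (g (row (t k)) (t l) * (g (row (t k)) 0)⁻¹)) := by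
                rw [s]; group
            _ = _ := by rw [ih]; group
      -- the extreme vertical edges are constant paths
      have hconst : ∀ l x, (∀ s, F (s, t l) = x) → (a (i l)).toFun (vert l) = 1 := by
        intro l x hx
        have e : vert l = (ContinuousMap.const I x).comp (seg 0 0).toContinuousMap := by
          ext u; exact hx _
        rw [e]
        refine (a (i l)).seg_self _ ?_
        have := hi l (a := (t k, t l)) ⟨⟨le_rfl, hk⟩, le_rfl, hm (Nat.le_succ l)⟩
        rwa [mem_preimage, hx] at this
      have := tele n
      rw [hconst n y (fun s => by rw [hn n le_rfl]; simp),
        hconst 0 x (fun s => by rw [h0]; simp)] at this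
      simpa [hn n le_rfl] using this
    have hall : ∀ k, g (row (t 0)) 1 * (g (row (t 0)) 0)⁻¹ =
        g (row (t k)) 1 * (g (row (t k)) 0)⁻¹ := by
      intro k
      induction k with
      | zero => rfl
      | succ k ih => rw [ih, key k]
    have := hall n
    rw [h0, hn n le_rfl] at this
    have hp : row 0 = p.toContinuousMap := by ext u; simp [row]
    have hq : row 1 = q.toContinuousMap := by ext u; simp [row]
    rwa [hp, hq] at this
  · intro i f hf
    have := hg f i 0 1 zero_le_one (fun r _ => hf r)
    rw [seg_zero_one, ContinuousMap.comp_id] at this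
    exact this.symm

end Holonomy

/-! ### The fundamental group of a space with a simply connected piece glued along several
simply connected pieces -/

section VanKampen

open unitInterval Set
open CategoryTheory Topology

variable {X : Type*} [TopologicalSpace X] {G : Type*} [Group G]

/-- A continuous map into the range of an embedding factors through it. -/
lemma exists_factor {A B : Type*} [TopologicalSpace A] [TopologicalSpace B] {j : A → X}
    (hj : IsEmbedding j) (f : C(B, X)) (h : ∀ t, f t ∈ range j) :
    ∃ f' : C(B, A), ∀ t, j (f' t) = f t := by
  choose g hg using h
  exact ⟨⟨g, hj.continuous_iff.2 (by simpa [Function.comp_def, hg] using f.continuous)⟩, hg⟩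

/-- A free path as a path between its endpoints. -/
def asPath {A : Type*} [TopologicalSpace A] (f : C(I, A)) : Path (f 0) (f 1) := ⟨f, rfl, rfl⟩

/-- A contravariant group-valued functor on the fundamental groupoid of `A`, for `A` embedded
in `X`, as a holonomy over the image of `A`. -/
lemma HolOn.exists_of_functor {A : Type*} [TopologicalSpace A] {j : A → X} (hj : IsEmbedding j)
    (φ : ∀ x y : A, Path.Homotopic.Quotient x y → G)
    (hφ : ∀ (x y z : A) (p : Path x y) (q : Path y z),
      φ x z (.mk (p.trans q)) = φ y z (.mk q) * φ x y (.mk p)) :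
    ∃ a : HolOn (range j) G, ∀ (x y : A) (p : Path x y),
      a.toFun ((⟨j, hj.continuous⟩ : C(A, X)).comp p.toContinuousMap) = φ x y (.mk p) := by
  have hcast : ∀ (f : C(I, A)) (x y : A) (hx : f 0 = x) (hy : f 1 = y),
      φ x y (.mk ⟨f, hx, hy⟩) = φ _ _ (.mk (asPath f)) := by
    rintro f _ _ rfl rfl; rfl
  choose F hF using fun (f : C(I, X)) => exists_factor (B := I) hj f
  let v : C(I, X) → G := fun f => if h : ∀ t, f t ∈ range j then φ _ _ (.mk (asPath (F f h))) else 1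
  have hv : ∀ (x y : A) (p : Path x y),
      v ((⟨j, hj.continuous⟩ : C(A, X)).comp p.toContinuousMap) = φ x y (.mk p) := by
    intro x y p
    have h : ∀ t, ((⟨j, hj.continuous⟩ : C(A, X)).comp p.toContinuousMap) t ∈ range j :=
      fun t => ⟨p t, rfl⟩
    simp only [v]
    rw [dif_pos h]
    have e : F _ h = p.toContinuousMap := by
      ext t; exact hj.injective (hF _ h t)
    rw [e, ← hcast _ _ _ p.source p.target]
  have hv' : ∀ {x y : X} (p : Path x y) (_ : ∀ t, p t ∈ range j) (x' y' : A)
      (_ : j x' = x) (_ : j y' = y),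
      ∃ p' : Path x' y', (p'.map hj.continuous).toContinuousMap = p.toContinuousMap := by
    intro x y p h x' y' hx hy
    obtain ⟨f, hf⟩ := exists_factor hj p.toContinuousMap h
    refine ⟨⟨f, hj.injective ?_, hj.injective ?_⟩, ?_⟩
    · rw [hx]; exact (hf 0).trans p.source
    · rw [hy]; exact (hf 1).trans p.target
    · ext t; exact hf t
  refine ⟨⟨v, ?_, ?_⟩, hv⟩
  · intro x y z p q hp hq
    obtain ⟨x', rfl⟩ : x ∈ range j := by simpa using hp 0
    obtain ⟨y', rfl⟩ : y ∈ range j := by simpa using hp 1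
    obtain ⟨z', rfl⟩ : z ∈ range j := by simpa using hq 1
    obtain ⟨p', hp'⟩ := hv' p hp x' y' rfl rfl
    obtain ⟨q', hq'⟩ := hv' q hq y' z' rfl rfl
    obtain rfl : p'.map hj.continuous = p := by ext t; exact congrArg (fun f => f t) hp'
    obtain rfl : q'.map hj.continuous = q := by ext t; exact congrArg (fun f => f t) hq'
    rw [← Path.map_trans]
    exact (hv _ _ (p'.trans q')).trans ((hφ _ _ _ p' q').trans
      (congrArg₂ _ (hv _ _ q').symm (hv _ _ p').symm))
  · intro x y p q H hH
    obtain ⟨x', rfl⟩ : x ∈ range j := by simpa using hH (0, 0)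
    obtain ⟨y', rfl⟩ : y ∈ range j := by simpa using hH (0, 1)
    have hp : ∀ t, p t ∈ range j := fun t => by simpa using hH (0, t)
    have hq : ∀ t, q t ∈ range j := fun t => by simpa using hH (1, t)
    obtain ⟨p', hp'⟩ := hv' p hp x' y' rfl rfl
    obtain ⟨q', hq'⟩ := hv' q hq x' y' rfl rfl
    obtain rfl : p'.map hj.continuous = p := by ext t; exact congrArg (fun f => f t) hp'
    obtain rfl : q'.map hj.continuous = q := by ext t; exact congrArg (fun f => f t) hq'
    obtain ⟨H', hH'⟩ := exists_factor hj H.toContinuousMap hH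
    have hH'' : ∀ t, j (H' t) = H t := hH'
    refine (hv _ _ p').trans (Eq.trans ?_ (hv _ _ q').symm)
    congr 1
    refine Path.Homotopic.Quotient.eq.2 ⟨⟨⟨H', ?_, ?_⟩, ?_⟩⟩
    · intro t; exact hj.injective (by simp [hH''])
    · intro t; exact hj.injective (by simp [hH''])
    · rintro s t (rfl | rfl)
      · exact hj.injective (by simp [hH''])
      · exact hj.injective (by simp [hH''])

/-- Uniqueness half of the van Kampen theorem: a holonomy is determined by its values on the paths
which stay in a member of an open cover. -/
lemma HolOn.ext_of_cover {ι : Type*} {U : ι → Set X} (hU : ∀ i, IsOpen (U i))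
    (hc : ⋃ i, U i = univ) (b b' : HolOn (univ : Set X) G)
    (h : ∀ i (f : C(I, X)), (∀ t, f t ∈ U i) → b.toFun f = b'.toFun f) (f : C(I, X)) :
    b.toFun f = b'.toFun f := by
  let a : ∀ i, HolOn (U i) G := fun i =>
    ⟨b.toFun, fun p q _ _ => b.trans' p q (by simp) (by simp), fun p q F _ => b.hom' p q F (by simp)⟩
  have h1 : ∀ c : HolOn (univ : Set X) G,
      (∀ i (f : C(I, X)), (∀ t, f t ∈ U i) → b.toFun f = c.toFun f) →
      IsLift a f (fun t => c.toFun (f.comp (seg 0 t).toContinuousMap)) := by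
    intro c hcb i s t hst hr
    change b.toFun _ = c.toFun _ * (c.toFun _)⁻¹
    rw [hcb i (f.comp (seg s t).toContinuousMap) (fun r => hr _ (seg_mem hst r)), c.seg_add f (show (0 : I) ≤ s from s.2.1) hst (by simp)]
    group
  have := IsLift.unique hU hc (h1 b fun _ _ _ => rfl) (h1 b' h)
  simpa [b.seg_self f (s := 0) (by simp), b'.seg_self f (s := 0) (by simp), seg_zero_one] using this

/-- The arrow of the fundamental groupoid of `T` given by an arrow in a subset `S ⊆ T`. -/
def incl {S T : Set X} (h : S ⊆ T) {a b : S}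
    (p : FundamentalGroupoid.mk a ⟶ FundamentalGroupoid.mk b) :
    FundamentalGroupoid.mk (⟨a.1, h a.2⟩ : T) ⟶ FundamentalGroupoid.mk (⟨b.1, h b.2⟩ : T) :=
  (FundamentalGroupoid.map ⟨inclusion h, continuous_inclusion h⟩).map p

/-- The arrow of the fundamental groupoid of `X` given by an arrow in a subset. -/
def toX {S : Set X} {a b : S} (p : FundamentalGroupoid.mk a ⟶ FundamentalGroupoid.mk b) :
    FundamentalGroupoid.mk (a : X) ⟶ FundamentalGroupoid.mk (b : X) :=
  (FundamentalGroupoid.map ⟨Subtype.val, continuous_subtype_val⟩).map p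

lemma incl_comp {S T : Set X} (h : S ⊆ T) {a b c : S}
    (p : FundamentalGroupoid.mk a ⟶ FundamentalGroupoid.mk b)
    (q : FundamentalGroupoid.mk b ⟶ FundamentalGroupoid.mk c) :
    incl h (p ≫ q) = incl h p ≫ incl h q := Functor.map_comp _ _ _

lemma incl_id {S T : Set X} (h : S ⊆ T) (a : S) :
    incl h (𝟙 (FundamentalGroupoid.mk a)) = 𝟙 _ := CategoryTheory.Functor.map_id _ _

lemma toX_comp {S : Set X} {a b c : S}
    (p : FundamentalGroupoid.mk a ⟶ FundamentalGroupoid.mk b)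
    (q : FundamentalGroupoid.mk b ⟶ FundamentalGroupoid.mk c) :
    toX (p ≫ q) = toX p ≫ toX q := Functor.map_comp _ _ _

lemma toX_id {S : Set X} (a : S) : toX (𝟙 (FundamentalGroupoid.mk a)) = 𝟙 _ :=
  CategoryTheory.Functor.map_id _ _

lemma toX_inv {S : Set X} {a b : S} (p : FundamentalGroupoid.mk a ⟶ FundamentalGroupoid.mk b) :
    toX (inv p) = inv (toX p) := Functor.map_inv _ _

lemma toX_incl {S T : Set X} (h : S ⊆ T) {a b : S}
    (p : FundamentalGroupoid.mk a ⟶ FundamentalGroupoid.mk b) : toX (incl h p) = toX p := by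
  induction p using Quotient.inductionOn
  rfl

/-- Some arrow between two points of a path connected space. -/
def someHom {A : Type*} [TopologicalSpace A] [PathConnectedSpace A] (a b : A) :
    FundamentalGroupoid.mk a ⟶ FundamentalGroupoid.mk b :=
  Path.Homotopic.Quotient.mk (PathConnectedSpace.somePath a b)

/-- The arrow represented by a path. -/
def homOf {A : Type*} [TopologicalSpace A] {a b : A} (p : Path a b) :
    FundamentalGroupoid.mk a ⟶ FundamentalGroupoid.mk b :=
  Path.Homotopic.Quotient.mk p

lemma homOf_trans {A : Type*} [TopologicalSpace A] {a b c : A} (p : Path a b) (q : Path b c) :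
    homOf (p.trans q) = homOf p ≫ homOf q := rfl

lemma exists_homOf {A : Type*} [TopologicalSpace A] {a b : A}
    (p : FundamentalGroupoid.mk a ⟶ FundamentalGroupoid.mk b) : ∃ q : Path a b, homOf q = p := by
  induction p using Quotient.inductionOn with
  | _ q => exact ⟨q, rfl⟩

lemma hom_unique {A : Type*} [TopologicalSpace A] [SimplyConnectedSpace A] {a b : A}
    (p q : FundamentalGroupoid.mk a ⟶ FundamentalGroupoid.mk b) : p = q :=
  Subsingleton.elim (α := Path.Homotopic.Quotient a b) _ _

/-- If `X` is the union of two open sets `U` and `W`, with `U` path connected and `W` simply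
connected, whose intersection is a disjoint union of simply connected open sets `O k`, then
`π₁(X)` is the free product of `π₁(U)` with a free group having one generator for
each `k ≠ k₀`. -/
theorem fundamentalGroup_union {κ : Type*} (k₀ : κ) (U W : Set X) (O : κ → Set X)
    (hU : IsOpen U) (hW : IsOpen W) (hUW : U ∪ W = univ) (hO : ∀ k, IsOpen (O k))
    (hdisj : ∀ k l x, x ∈ O k → x ∈ O l → k = l) (hOUW : ⋃ k, O k = U ∩ W)
    [PathConnectedSpace U] [SimplyConnectedSpace W] [hOs : ∀ k, SimplyConnectedSpace (O k)] :
    ∃ u₀ : U, Nonempty (FundamentalGroup X (u₀ : X) ≃*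
      Monoid.Coprod (FundamentalGroup U u₀) (FreeGroup {k // k ≠ k₀})) := by
  have hOU : ∀ k, O k ⊆ U := fun k => (subset_iUnion O k).trans (hOUW ▸ inter_subset_left)
  have hOW : ∀ k, O k ⊆ W := fun k => (subset_iUnion O k).trans (hOUW ▸ inter_subset_right)
  obtain ⟨o, ho⟩ : ∃ o : κ → X, ∀ k, o k ∈ O k :=
    ⟨fun k => ((inferInstance : Nonempty (O k)).some : O k), fun k => Subtype.coe_prop _⟩
  have hoU : ∀ k, o k ∈ U := fun k => hOU k (ho k)
  have hoW : ∀ k, o k ∈ W := fun k => hOW k (ho k)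
  -- connecting arrows in `U`, normalised at the basepoint and along each `O k`
  obtain ⟨c', hc'⟩ : ∃ c' : ∀ k, FundamentalGroupoid.mk (⟨o k₀, hoU k₀⟩ : U) ⟶
      FundamentalGroupoid.mk ⟨o k, hoU k⟩, c' k₀ = 𝟙 _ :=
    ⟨Function.update (fun k => someHom _ _) k₀ (𝟙 _), by simp⟩
  obtain ⟨c, hc⟩ : ∃ c : ∀ u : U, FundamentalGroupoid.mk (⟨o k₀, hoU k₀⟩ : U) ⟶
      FundamentalGroupoid.mk u,
      ∀ k (x : X) (hx : x ∈ O k)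
        (p : FundamentalGroupoid.mk (⟨o k, ho k⟩ : O k) ⟶ FundamentalGroupoid.mk ⟨x, hx⟩),
        c ⟨x, hOU k hx⟩ = c' k ≫ incl (hOU k) p := by
    have : ∀ u : U, ∃ c : FundamentalGroupoid.mk (⟨o k₀, hoU k₀⟩ : U) ⟶ FundamentalGroupoid.mk u,
        ∀ k (hx : u.1 ∈ O k)
        (p : FundamentalGroupoid.mk (⟨o k, ho k⟩ : O k) ⟶ FundamentalGroupoid.mk ⟨u.1, hx⟩),
        c = c' k ≫ incl (hOU k) p := by
      intro u
      by_cases h : ∃ k, (u : X) ∈ O k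
      · obtain ⟨k, hk⟩ := h
        refine ⟨c' k ≫ incl (hOU k) (someHom (⟨o k, ho k⟩ : O k) ⟨u.1, hk⟩), fun l hx p => ?_⟩
        obtain rfl : k = l := hdisj k l _ hk hx
        rw [hom_unique p (someHom (⟨o k, ho k⟩ : O k) ⟨u.1, hk⟩)]
      · exact ⟨someHom _ _, fun k hx _ => absurd ⟨k, hx⟩ h⟩
    choose c hc using this
    exact ⟨c, fun k x hx p => hc ⟨x, hOU k hx⟩ k hx p⟩
  have hco : ∀ k, c ⟨o k, hoU k⟩ = c' k := fun k => by
    rw [hc k _ (ho k) (𝟙 _), incl_id, Category.comp_id]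
  have hcb : c ⟨o k₀, hoU k₀⟩ = 𝟙 _ := (hco k₀).trans hc'
  let A := Monoid.Coprod (FundamentalGroup U (⟨o k₀, hoU k₀⟩ : U)) (FreeGroup {k // k ≠ k₀})
  let inl : FundamentalGroup U (⟨o k₀, hoU k₀⟩ : U) →* A := Monoid.Coprod.inl
  let inr : FreeGroup {k // k ≠ k₀} →* A := Monoid.Coprod.inr
  -- the generators, and a locally constant function on `U ∩ W`, extended by `1`, whose increments
  -- are the holonomy on `W`
  obtain ⟨s, hs0, hs1⟩ : ∃ s : κ → A, s k₀ = 1 ∧ ∀ k : {k // k ≠ k₀}, s k = inr (.of k) :=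
    ⟨fun k => if h : k = k₀ then 1 else inr (.of ⟨k, h⟩), dif_pos rfl, fun k => dif_neg k.2⟩
  obtain ⟨fW, hfW, hfW'⟩ : ∃ fW : X → A, (∀ k x, x ∈ O k → fW x = s k) ∧
      (∀ x, (∀ k, x ∉ O k) → fW x = 1) := by
    refine ⟨fun x => if h : ∃ k, x ∈ O k then s h.choose else 1, fun k x hx => ?_, fun x hx => ?_⟩
    · have h : ∃ k, x ∈ O k := ⟨k, hx⟩
      exact (dif_pos h).trans (congrArg s (hdisj _ _ x h.choose_spec hx))
    · exact dif_neg (by simpa using hx)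
  -- the holonomy on `U` closes paths up through the arrows `c`; both holonomies are trivial on the
  -- paths of `U ∩ W`, each of which stays in one `O k`
  let loopU : ∀ {x y : U}, (FundamentalGroupoid.mk x ⟶ FundamentalGroupoid.mk y) →
      FundamentalGroup U (⟨o k₀, hoU k₀⟩ : U) := fun {x y} p => c x ≫ p ≫ inv (c y)
  have loopU_eq : ∀ {x y : U} (p : FundamentalGroupoid.mk x ⟶ FundamentalGroupoid.mk y),
      loopU p = c x ≫ p ≫ inv (c y) := fun p => rfl
  obtain ⟨aU, haU⟩ := HolOn.exists_of_functor (G := A) (j := (Subtype.val : U → X))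
    IsEmbedding.subtypeVal (fun x y p => inl (loopU p)) (by
      intro x y z p q
      rw [← map_mul]
      congr 1
      change c x ≫ (homOf p ≫ homOf q) ≫ inv (c z) =
        (c x ≫ homOf p ≫ inv (c y)) ≫ (c y ≫ homOf q ≫ inv (c z))
      simp only [Category.assoc, IsIso.inv_hom_id_assoc])
  obtain ⟨aW, haW⟩ := HolOn.exists_of_functor (G := A) (j := (Subtype.val : W → X))
    IsEmbedding.subtypeVal (fun x y p => fW y * (fW x)⁻¹) fun x y z _ _ => by
      rw [← mul_assoc, inv_mul_cancel_right]
  -- the cover of `X` by `U` and `W`, indexed by `true` and `false`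
  let C : Bool → Set X := fun i => if i then range (Subtype.val : U → X)
    else range (Subtype.val : W → X)
  let a : ∀ i, HolOn (C i) A := fun i => match i with
    | true => aU
    | false => aW
  have hCo : ∀ i, IsOpen (C i) := by
    rintro (_ | _)
    · simpa [C] using hW
    · simpa [C] using hU
  have hCc : ⋃ i, C i = univ := by
    refine eq_univ_of_forall fun x => mem_iUnion.2 ?_
    rcases (hUW.symm ▸ mem_univ x : x ∈ U ∪ W) with h | h
    · exact ⟨true, by simpa [C] using h⟩
    · exact ⟨false, by simpa [C] using h⟩
  have hag : ∀ f : C(I, X), (∀ t, f t ∈ U) → (∀ t, f t ∈ W) → aU.toFun f = aW.toFun f := by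
    intro f h1 h2
    have hmem : ∀ t, ∃ k, f t ∈ O k := fun t => by
      have : f t ∈ ⋃ k, O k := hOUW ▸ ⟨h1 t, h2 t⟩
      simpa using this
    obtain ⟨k, hk⟩ := hmem 0
    have hcl : IsClopen (f ⁻¹' O k) := by
      refine ⟨⟨?_⟩, (hO k).preimage f.continuous⟩
      have : (f ⁻¹' O k)ᶜ = ⋃ l, ⋃ (_ : l ≠ k), f ⁻¹' O l := by
        ext t
        simp only [mem_compl_iff, mem_preimage, mem_iUnion, exists_prop]
        constructor
        · intro h
          obtain ⟨l, hl⟩ := hmem t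
          exact ⟨l, fun e => h (e ▸ hl), hl⟩
        · rintro ⟨l, hl, hl'⟩ h
          exact hl (hdisj _ _ _ hl' h)
      rw [this]
      exact isOpen_iUnion fun l => isOpen_iUnion fun _ => (hO l).preimage f.continuous
    have hall : ∀ t, f t ∈ O k := fun t => by
      have := hcl.eq_univ ⟨0, hk⟩
      exact (this.symm ▸ mem_univ t : t ∈ f ⁻¹' O k)
    let p : Path (⟨f 0, hall 0⟩ : O k) ⟨f 1, hall 1⟩ := ⟨⟨fun t => ⟨f t, hall t⟩, by fun_prop⟩, rfl, rfl⟩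
    have e1 := haU _ _ (p.map (continuous_inclusion (hOU k)))
    have e2 := haW _ _ (p.map (continuous_inclusion (hOW k)))
    refine e1.trans (Eq.trans ?_ e2.symm)
    rw [hfW k (inclusion (hOW k) ⟨f 1, hall 1⟩) (hall 1),
      hfW k (inclusion (hOW k) ⟨f 0, hall 0⟩) (hall 0), mul_inv_cancel]
    rw [← map_one inl]
    congr 1
    have e3 := hc k _ (hall 0) (someHom _ _)
    have e4 := hc k _ (hall 1) (someHom _ _ ≫ homOf p)
    rw [incl_comp, ← Category.assoc, ← e3] at e4
    change c ⟨f 0, hOU k (hall 0)⟩ ≫ incl (hOU k) (homOf p) ≫ inv (c ⟨f 1, hOU k (hall 1)⟩) = 𝟙 _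
    rw [e4, ← Category.assoc, IsIso.hom_inv_id]
  have hAg : Agree a := by
    rintro (_ | _) (_ | _) f h1 h2
    · rfl
    · exact (hag f (by simpa [C] using h2) (by simpa [C] using h1)).symm
    · exact hag f (by simpa [C] using h1) (by simpa [C] using h2)
    · rfl
  obtain ⟨Φh, hΦh⟩ := exists_glue a hAg hCo hCc
  -- the holonomy on homotopy classes
  let Φq : ∀ {x y : X}, (FundamentalGroupoid.mk x ⟶ FundamentalGroupoid.mk y) → A := fun {x y} =>
    Quotient.lift (fun p : Path x y => Φh.toFun p.toContinuousMap)
      (fun p q ⟨F⟩ => Φh.hom' p q F (by simp))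
  have hΦq : ∀ {x y z : X} (p : FundamentalGroupoid.mk x ⟶ FundamentalGroupoid.mk y)
      (q : FundamentalGroupoid.mk y ⟶ FundamentalGroupoid.mk z),
      Φq (p ≫ q) = Φq q * Φq p := by
    intro x y z p q
    obtain ⟨p, rfl⟩ := exists_homOf p
    obtain ⟨q, rfl⟩ := exists_homOf q
    exact Φh.trans' _ _ (by simp) (by simp)
  have hΦid : ∀ x : X, Φq (𝟙 (FundamentalGroupoid.mk x)) = 1 := fun x => by
    have := hΦq (𝟙 (FundamentalGroupoid.mk x)) (𝟙 (FundamentalGroupoid.mk x))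
    rw [Category.comp_id] at this
    exact left_eq_mul.1 this
  have hΦinv : ∀ {x y : X} (p : FundamentalGroupoid.mk x ⟶ FundamentalGroupoid.mk y),
      Φq (inv p) = (Φq p)⁻¹ := by
    intro x y p
    rw [eq_inv_iff_mul_eq_one, ← hΦq, IsIso.hom_inv_id, hΦid]
  have hΦqU : ∀ {x y : U} (p : FundamentalGroupoid.mk x ⟶ FundamentalGroupoid.mk y),
      Φq (toX p) = inl (loopU p) := by
    intro x y p
    obtain ⟨p, rfl⟩ := exists_homOf p
    exact (hΦh true _ (fun t => ⟨p t, rfl⟩)).trans (haU x y p)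
  have hΦqW : ∀ {x y : W} (p : FundamentalGroupoid.mk x ⟶ FundamentalGroupoid.mk y),
      Φq (toX p) = fW y * (fW x)⁻¹ := by
    intro x y p
    obtain ⟨p, rfl⟩ := exists_homOf p
    exact (hΦh false _ (fun t => ⟨p t, rfl⟩)).trans (haW x y p)
  let B := FundamentalGroup X (o k₀)
  let Φ : B →* A := MonoidHom.mk' (fun p => Φq p) (fun p q => hΦq q p)
  -- the map in the other direction sends the generator `k` to the loop going from the basepoint
  -- to `o k` through `W` and back through `U`
  obtain ⟨ω, hω, hω0⟩ : ∃ ω : ∀ w : W, FundamentalGroupoid.mk (⟨o k₀, hoW k₀⟩ : W) ⟶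
      FundamentalGroupoid.mk w, (∀ (x y : W) (p : FundamentalGroupoid.mk x ⟶
        FundamentalGroupoid.mk y), ω y = ω x ≫ p) ∧ ω ⟨o k₀, hoW k₀⟩ = 𝟙 _ :=
    ⟨fun w => someHom _ _, fun x y p => hom_unique _ _, hom_unique _ _⟩
  let loop : κ → B := fun k => (toX (ω ⟨o k, hoW k⟩) : FundamentalGroupoid.mk (o k₀) ⟶ FundamentalGroupoid.mk (o k)) ≫
    inv (toX (c' k) : FundamentalGroupoid.mk (o k₀) ⟶ FundamentalGroupoid.mk (o k))
  have loop_eq : ∀ k, loop k = (toX (ω ⟨o k, hoW k⟩) : FundamentalGroupoid.mk (o k₀) ⟶ FundamentalGroupoid.mk (o k)) ≫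
    inv (toX (c' k) : FundamentalGroupoid.mk (o k₀) ⟶ FundamentalGroupoid.mk (o k)) := fun k => rfl
  let ΨU : FundamentalGroup U (⟨o k₀, hoU k₀⟩ : U) →* B :=
    FundamentalGroup.map ⟨Subtype.val, continuous_subtype_val⟩ (⟨o k₀, hoU k₀⟩ : U)
  have hΨUt : ∀ g, ΨU g = toX g := fun g => rfl
  let Ψ : A →* B := Monoid.Coprod.lift ΨU (FreeGroup.lift fun k => loop k)
  have hΨU : ∀ g, Ψ (inl g) = ΨU g := fun g => Monoid.Coprod.lift_apply_inl _ _ _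
  have hΨs : ∀ k, Ψ (s k) = loop k := by
    intro k
    by_cases h : k = k₀
    · subst h
      rw [hs0, map_one, loop_eq, hω0, hc', toX_id, toX_id, IsIso.inv_id]
      exact (Category.comp_id _).symm
    · rw [hs1 ⟨k, h⟩]
      exact (Monoid.Coprod.lift_apply_inr _ _ _).trans FreeGroup.lift_apply_of
  have hΦΨ : Φ.comp Ψ = MonoidHom.id A := by
    refine Monoid.Coprod.hom_ext ?_ ?_
    · ext g
      have h1 : Φ (ΨU g) = inl g := by
        refine (hΦqU (x := ⟨o k₀, hoU k₀⟩) (y := ⟨o k₀, hoU k₀⟩) g).trans ?_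
        rw [loopU_eq, hcb, IsIso.inv_id, Category.comp_id, Category.id_comp]
      exact (congrArg Φ (hΨU g)).trans h1
    · refine FreeGroup.ext_hom _ _ fun k => ?_
      have h1 : Φ (loop k) = s k := by
        change Φq (loop k) = _
        rw [loop_eq, hΦq, hΦinv, show Φq (toX (c' k)) = _ from hΦqU (c' k),
          show Φq (toX (ω ⟨o k, hoW k⟩)) = _ from hΦqW (ω ⟨o k, hoW k⟩), loopU_eq, hcb, hco,
          IsIso.hom_inv_id, Category.id_comp, hfW k _ (ho k), hfW k₀ _ (ho k₀), hs0]
        have : inl (𝟙 _) = 1 := map_one inl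
        rw [this]; simp
      change Φ (Ψ (inr (.of k))) = inr (.of k)
      rw [← hs1, hΨs, h1]
  -- compare `Ψ ∘ Φ` with the identity through holonomies with values in `B`
  have hex : ∀ x, x ∉ U → x ∈ W := fun x => (hUW.symm ▸ mem_univ x : x ∈ U ∪ W).resolve_left
  obtain ⟨K, hKU, hKn⟩ : ∃ K : ∀ x : X, FundamentalGroupoid.mk (o k₀) ⟶ FundamentalGroupoid.mk x,
      (∀ u : U, K u = toX (c u)) ∧ ∀ w : W, (w : X) ∉ U → K w = toX (ω w) :=
    ⟨fun x => if h : x ∈ U then toX (c ⟨x, h⟩) else toX (ω ⟨x, hex x h⟩),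
      fun u => dif_pos u.2, fun w h => dif_neg h⟩
  let Ψ' : A → (FundamentalGroupoid.mk (o k₀) ⟶ FundamentalGroupoid.mk (o k₀)) := Ψ
  have hKW : ∀ w : W, K w = inv (Ψ' (fW w)) ≫ toX (ω w) := by
    intro w
    by_cases h : (w : X) ∈ U
    · obtain ⟨k, hk⟩ : ∃ k, (w : X) ∈ O k := by
        have : (w : X) ∈ ⋃ k, O k := hOUW ▸ ⟨h, w.2⟩
        simpa using this
      have e0 : K w = toX (c ⟨w, hOU k hk⟩) := hKU ⟨w, h⟩
      have e2 := hω ⟨o k, hoW k⟩ w (incl (hOW k) (someHom ⟨o k, ho k⟩ ⟨w.1, hk⟩))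
      have e3 : Ψ' (s k) = (toX (ω ⟨o k, hoW k⟩) : FundamentalGroupoid.mk (o k₀) ⟶ FundamentalGroupoid.mk (o k)) ≫
    inv (toX (c' k) : FundamentalGroupoid.mk (o k₀) ⟶ FundamentalGroupoid.mk (o k)) := hΨs k
      rw [hfW k _ hk, e0, e3, e2, hc k w.1 hk (someHom _ _), toX_comp, toX_comp, toX_incl, toX_incl]
      rw [IsIso.inv_comp, IsIso.inv_inv, Category.assoc, IsIso.inv_hom_id_assoc]
    · have e3 : Ψ' 1 = 𝟙 _ := map_one Ψ
      rw [hKn w h, hfW' w (fun k hk => h (hOU k hk)), e3, IsIso.inv_id, Category.id_comp]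
  obtain ⟨bK, hbK⟩ := HolOn.exists_of_functor (G := B) (j := (id : X → X)) IsEmbedding.id
    (fun x y p => (K x ≫ (p : FundamentalGroupoid.mk x ⟶ FundamentalGroupoid.mk y) ≫
      inv (K y) : FundamentalGroupoid.mk (o k₀) ⟶ FundamentalGroupoid.mk (o k₀))) (by
      intro x y z p q
      change K x ≫ (homOf p ≫ homOf q) ≫ inv (K z) =
        (K x ≫ homOf p ≫ inv (K y)) ≫ (K y ≫ homOf q ≫ inv (K z))
      simp only [Category.assoc, IsIso.inv_hom_id_assoc])
  let bΦ : HolOn (univ : Set X) B := ⟨fun f => Ψ (Φh.toFun f),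
    fun p q h1 h2 => by rw [Φh.trans' p q h1 h2, map_mul], fun p q F hF => by rw [Φh.hom' p q F hF]⟩
  have hbK' : ∀ {x y : X} (p : Path x y), bK.toFun p.toContinuousMap =
      K x ≫ homOf p ≫ inv (K y) := hbK _ _
  let bK₀ : HolOn (univ : Set X) B := ⟨bK.toFun, fun p q h1 h2 => bK.trans' p q (by simp) (by simp),
    fun p q F hF => bK.hom' p q F (by simp)⟩
  have hcmp := HolOn.ext_of_cover hCo hCc bΦ bK₀ (by
    rintro (_ | _) f hf
    · obtain ⟨f', hf'⟩ := exists_factor (j := (Subtype.val : W → X)) IsEmbedding.subtypeVal f hf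
      obtain rfl : f = ((asPath f').map continuous_subtype_val).toContinuousMap := by
        ext t; exact (hf' t).symm
      have e1 : Ψ' (Φq (toX (homOf (asPath f')))) =
          inv (Ψ' (fW (f' 0))) ≫ Ψ' (fW (f' 1)) := by
        rw [hΦqW]
        refine (map_mul Ψ _ _).trans ?_
        change Ψ' (fW (f' 0))⁻¹ ≫ Ψ' (fW (f' 1)) = _
        congr 1
        refine IsIso.eq_inv_of_hom_inv_id ?_
        exact (map_mul Ψ _ _).symm.trans ((congrArg Ψ (inv_mul_cancel _)).trans (map_one Ψ))
      refine e1.trans ((hbK' ((asPath f').map continuous_subtype_val)).trans ?_).symm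
      have e2 : toX (ω (f' 1)) = toX (ω (f' 0)) ≫ toX (homOf (asPath f')) := by
        rw [hω _ _ (homOf (asPath f')), toX_comp]
      rw [hKW, hKW, e2]
      change (inv (Ψ' (fW (f' 0))) ≫ toX (ω (f' 0))) ≫ toX (homOf (asPath f')) ≫ _ = _
      simp only [IsIso.inv_comp, IsIso.inv_inv, Category.assoc, IsIso.hom_inv_id_assoc]
    · obtain ⟨f', hf'⟩ := exists_factor (j := (Subtype.val : U → X)) IsEmbedding.subtypeVal f hf
      obtain rfl : f = ((asPath f').map continuous_subtype_val).toContinuousMap := by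
        ext t; exact (hf' t).symm
      have e1 : Ψ (Φq (toX (homOf (asPath f')))) = toX (loopU (homOf (asPath f'))) := by
        rw [hΦqU, hΨU, hΨUt]
      refine e1.trans ((hbK' ((asPath f').map continuous_subtype_val)).trans ?_).symm
      rw [hKU, hKU, loopU_eq, toX_comp, toX_comp, toX_inv]
      rfl)
  have hΨΦ : Ψ.comp Φ = MonoidHom.id B := by
    ext p
    obtain ⟨p, rfl⟩ := exists_homOf p
    refine (hcmp p.toContinuousMap).trans ((hbK' p).trans ?_)
    have : K (o k₀) = 𝟙 _ := by
      rw [hKU ⟨o k₀, hoU k₀⟩, hcb, toX_id]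
    rw [this, IsIso.inv_id, Category.comp_id, Category.id_comp]
    rfl
  exact ⟨⟨o k₀, hoU k₀⟩, ⟨MonoidHom.toMulEquiv Φ Ψ hΨΦ hΦΨ⟩⟩

end VanKampen

/-! ### Unordered configuration spaces -/

section UConfBasics

open unitInterval Set
open Topology

variable {n : ℕ} {A B : Type} [TopologicalSpace A] [TopologicalSpace B]

lemma permRel_equivalence (n : ℕ) (A : Type) [TopologicalSpace A] :
    Equivalence (permRel n A) where
  refl f := ⟨1, rfl⟩
  symm := by
    rintro f g ⟨π, h⟩
    exact ⟨π⁻¹, by rw [h]; ext i; simp⟩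
  trans := by
    rintro f g k ⟨π, h⟩ ⟨ρ, h'⟩
    exact ⟨ρ * π, by rw [h, h']; rfl⟩

lemma uconf_eq {f g : Conf n A} :
    (Quot.mk (permRel n A) f = Quot.mk _ g) ↔ permRel n A f g :=
  (permRel_equivalence n A).quot_mk_eq_iff f g

/-- Relabelling an ordered configuration. -/
def relabel (π : Equiv.Perm (Fin n)) (f : Conf n A) : Conf n A :=
  ⟨f.1 ∘ π, f.2.comp π.injective⟩

lemma continuous_relabel (π : Equiv.Perm (Fin n)) : Continuous (relabel (A := A) π) := by
  refine Continuous.subtype_mk (f := fun f : Conf n A => f.1 ∘ π) (continuous_pi fun i => ?_) _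
  exact (continuous_apply (π i)).comp continuous_subtype_val

lemma isOpenQuotientMap_mk : IsOpenQuotientMap (Quot.mk (permRel n A)) := by
  refine ⟨Quot.mk_surjective, continuous_quot_mk, fun S hS => ?_⟩
  rw [← isQuotientMap_quot_mk.isOpen_preimage]
  have : Quot.mk (permRel n A) ⁻¹' (Quot.mk (permRel n A) '' S) =
      ⋃ π : Equiv.Perm (Fin n), relabel π ⁻¹' S := by
    ext f
    simp only [mem_preimage, mem_image, mem_iUnion]
    constructor
    · rintro ⟨g, hg, h⟩
      obtain ⟨π, hπ⟩ := uconf_eq.1 h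
      refine ⟨π, ?_⟩
      have : relabel π f = g := Subtype.ext hπ.symm
      rwa [this]
    · rintro ⟨π, h⟩
      exact ⟨_, h, uconf_eq.2 ⟨π, rfl⟩⟩
  rw [this]
  exact isOpen_iUnion fun π => hS.preimage (continuous_relabel π)

/-- A continuous family of maps `A → B` induces a continuous family of maps of unordered
configurations, on any set of configurations which the maps keep injective. -/
lemma exists_umap {P : Type*} [TopologicalSpace P] (φ : C(P × A, B)) (S : Set (UConf n A))
    (h : ∀ p (f : Conf n A), Quot.mk _ f ∈ S → Function.Injective fun i => φ (p, f.1 i)) :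
    ∃ F : C(P × S, UConf n B), ∀ p f (hf : Quot.mk _ f ∈ S),
      F (p, ⟨Quot.mk _ f, hf⟩) = Quot.mk _ ⟨fun i => φ (p, f.1 i), h p f hf⟩ := by
  have key : ∀ x : P × S, ∃ y : UConf n B, ∀ f (hf : Quot.mk _ f = x.2.1),
      y = Quot.mk _ ⟨fun i => φ (x.1, f.1 i), h x.1 f (hf ▸ x.2.2)⟩ := by
    rintro ⟨p, ⟨q, hq⟩⟩
    obtain ⟨f, rfl⟩ := Quot.exists_rep q
    refine ⟨Quot.mk _ ⟨fun i => φ (p, f.1 i), h p f hq⟩, fun g hg => uconf_eq.2 ?_⟩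
    obtain ⟨π, hπ⟩ := uconf_eq.1 hg.symm
    refine ⟨π, ?_⟩
    ext i
    simp only [hπ, Function.comp_apply]
  choose F hF using key
  refine ⟨⟨F, ?_⟩, fun p f hf => hF (p, ⟨_, hf⟩) f rfl⟩
  have hq : IsOpenQuotientMap (Prod.map (id : P → P) (S.restrictPreimage (Quot.mk (permRel n A)))) :=
    IsOpenQuotientMap.id.prodMap (isOpenQuotientMap_mk.restrictPreimage S)
  rw [hq.isQuotientMap.continuous_iff]
  have : (F ∘ Prod.map (id : P → P) (S.restrictPreimage (Quot.mk (permRel n A)))) = fun x =>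
      Quot.mk _ ⟨fun i => φ (x.1, x.2.1.1 i), h x.1 x.2.1 x.2.2⟩ := by
    ext x
    exact hF _ x.2.1 rfl
  rw [this]
  exact continuous_quot_mk.comp (Continuous.subtype_mk (continuous_pi fun i =>
    φ.continuous.comp (continuous_fst.prodMk ((continuous_apply i).comp
      (continuous_subtype_val.comp (continuous_subtype_val.comp continuous_snd))))) _)

/-- Homeomorphic spaces have homeomorphic configuration spaces. -/
def uconfCongr (n : ℕ) (e : A ≃ₜ B) : UConf n A ≃ₜ UConf n B where
  toFun := Quot.map (fun f => ⟨e ∘ f.1, e.injective.comp f.2⟩)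
    (fun f g ⟨π, h⟩ => ⟨π, by simp only [h]; rfl⟩)
  invFun := Quot.map (fun f => ⟨e.symm ∘ f.1, e.symm.injective.comp f.2⟩)
    (fun f g ⟨π, h⟩ => ⟨π, by simp only [h]; rfl⟩)
  left_inv := by
    rintro ⟨f⟩
    exact congrArg (Quot.mk _) (Subtype.ext (by ext i; simp))
  right_inv := by
    rintro ⟨f⟩
    exact congrArg (Quot.mk _) (Subtype.ext (by ext i; simp))
  continuous_toFun := by
    refine continuous_quot_lift _ (continuous_quot_mk.comp (Continuous.subtype_mk ?_ _))
    exact continuous_pi fun i => e.continuous.comp ((continuous_apply i).comp continuous_subtype_val)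
  continuous_invFun := by
    refine continuous_quot_lift _ (continuous_quot_mk.comp (Continuous.subtype_mk ?_ _))
    exact continuous_pi fun i =>
      e.symm.continuous.comp ((continuous_apply i).comp continuous_subtype_val)

/-- The unordered pair of two distinct points. -/
def upair (a b : A) (h : a ≠ b) : UConf 2 A :=
  Quot.mk _ ⟨![a, b], by
    intro i j hij
    fin_cases i <;> fin_cases j <;> simp_all⟩

lemma upair_comm (a b : A) (h : a ≠ b) : upair a b h = upair b a h.symm := by
  refine uconf_eq.2 ⟨Equiv.swap 0 1, ?_⟩
  ext i
  fin_cases i <;> simp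

lemma exists_upair (q : UConf 2 A) : ∃ a b h, q = upair a b h := by
  obtain ⟨f, rfl⟩ := Quot.exists_rep q
  refine ⟨f.1 0, f.1 1, fun h => by simpa using f.2 h, ?_⟩
  refine congrArg (Quot.mk _) (Subtype.ext ?_)
  ext i
  fin_cases i <;> rfl

/-- Moving one point of a pair while the other one stands still. -/
lemma joined_upair {a a' b : A} (γ : Path a a') (h : ∀ t, γ t ≠ b) :
    Joined (upair a b (by simpa using h 0)) (upair a' b (by simpa using h 1)) := by
  refine ⟨⟨⟨fun t => upair (γ t) b (h t), ?_⟩, ?_, ?_⟩⟩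
  · refine continuous_quot_mk.comp (Continuous.subtype_mk ?_ _)
    refine continuous_pi fun i => ?_
    fin_cases i
    · exact γ.continuous
    · exact continuous_const
  · simp
  · simp

end UConfBasics

/-! ### Stars, whiskers and the two-piece decomposition -/

section Whisker

open unitInterval Set
open Topology

variable {Y : Type} [TopologicalSpace Y] {v : Y} {κ : Type}

/-- A star-shaped neighbourhood of the point `v`: an open set consisting of `v` and of disjoint
open contractible arms, which contracts to `v` and each of whose arms accumulates at `v`. -/
structure Star (v : Y) (κ : Type) where
  /-- The arms. -/
  arm : κ → Set Y
  /-- The whole neighbourhood. -/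
  star : Set Y
  isOpen_arm : ∀ k, IsOpen (arm k)
  isOpen_star : IsOpen star
  arm_disjoint : ∀ k l y, y ∈ arm k → y ∈ arm l → k = l
  notMem_arm : ∀ k, v ∉ arm k
  mem_star : ∀ y, y ∈ star ↔ y = v ∨ ∃ k, y ∈ arm k
  /-- The contraction of the star to `v`. -/
  contr : C(I × star, star)
  contr_zero : ∀ y, contr (0, y) = y
  contr_one : ∀ y, (contr (1, y) : Y) = v
  contr_fix : ∀ t (y : star), (y : Y) = v → (contr (t, y) : Y) = v
  /-- A point of each arm. -/
  tip : ∀ k, arm k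
  /-- The contraction of an arm to its tip. -/
  armContr : ∀ k, C(I × arm k, arm k)
  armContr_zero : ∀ k y, armContr k (0, y) = y
  armContr_one : ∀ k y, armContr k (1, y) = tip k
  /-- A path from `v` out to the tip of an arm. -/
  leg : ∀ k, Path v (tip k : Y)
  leg_mem : ∀ k t, 0 < t → leg k t ∈ arm k

/-- The space `Y` with a whisker, i.e. an interval `[0, 1]`, attached at the point `v`. -/
abbrev Whisker (Y : Type) (v : Y) : Type :=
  {z : Y × ℝ // 0 ≤ z.2 ∧ z.2 ≤ 1 ∧ (z.2 = 0 ∨ z.1 = v)}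

lemma Whisker.eq_of_pos (z : Whisker Y v) (h : 0 < z.1.2) : z.1.1 = v :=
  z.2.2.2.resolve_left h.ne'

lemma injective_fin2 {A : Type*} {f : Fin 2 → A} : Function.Injective f ↔ f 0 ≠ f 1 := by
  refine ⟨fun h e => by simpa using h e, fun h i j hij => ?_⟩
  fin_cases i <;> fin_cases j <;> simp_all

/-- The configurations of the whiskered space whose two points have distinct projections
to `Y`. -/
def spread (Y : Type) [TopologicalSpace Y] (v : Y) : Set (UConf 2 (Whisker Y v)) :=
  {q | Quot.lift (fun f : Conf 2 (Whisker Y v) => Function.Injective fun i => (f.1 i).1.1)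
    (by
      rintro f g ⟨π, h⟩
      have : (fun i => (f.1 i).1.1) = (fun i => (g.1 i).1.1) ∘ π := by
        ext i; rw [h]; rfl
      rw [this]
      exact propext ⟨fun h => h.of_comp_right π.surjective, fun h => h.comp π.injective⟩) q}

lemma mk_mem_spread {f : Conf 2 (Whisker Y v)} :
    Quot.mk _ f ∈ spread Y v ↔ Function.Injective fun i => (f.1 i).1.1 := Iff.rfl

lemma isOpen_spread [T2Space Y] : IsOpen (spread Y v) := by
  rw [← isOpenQuotientMap_mk.isQuotientMap.isOpen_preimage]
  have : Quot.mk (permRel 2 (Whisker Y v)) ⁻¹' spread Y v =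
      {f | (f.1 0).1.1 ≠ (f.1 1).1.1} := by
    ext f
    exact mk_mem_spread.trans injective_fin2
  rw [this]
  have hc : ∀ i : Fin 2, Continuous fun f : Conf 2 (Whisker Y v) => (f.1 i).1.1 := fun i =>
    continuous_fst.comp (continuous_subtype_val.comp
      ((continuous_apply i).comp continuous_subtype_val))
  exact isOpen_ne_fun (hc 0) (hc 1)

/-- Scaling the whisker coordinate. -/
def shrink (Y : Type) [TopologicalSpace Y] (v : Y) : C(I × Whisker Y v, Whisker Y v) where
  toFun x := ⟨(x.2.1.1, x.1 * x.2.1.2), mul_nonneg x.1.2.1 x.2.2.1,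
    mul_le_one₀ x.1.2.2 x.2.2.1 x.2.2.2.1, by
      rcases x.2.2.2.2 with h | h
      · left; simp [h]
      · exact Or.inr h⟩
  continuous_toFun := by fun_prop

/-- Configurations with distinct projections retract onto the configurations of `Y`. -/
lemma nonempty_spread_homotopyEquiv :
    Nonempty (ContinuousMap.HomotopyEquiv (spread Y v) (UConf 2 Y)) := by
  obtain ⟨R, hR⟩ := exists_umap (n := 2) (P := Unit) (A := Whisker Y v) (B := Y)
    ⟨fun x => x.2.1.1, by fun_prop⟩ (spread Y v) (fun _ f hf => hf)
  obtain ⟨J, hJ⟩ := exists_umap (n := 2) (P := Unit) (A := Y) (B := Whisker Y v)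
    ⟨fun x => ⟨(x.2, 0), le_rfl, zero_le_one, Or.inl rfl⟩, by fun_prop⟩ univ
    (fun _ f _ i j hij => f.2 (congrArg (fun z => z.1.1) hij))
  obtain ⟨H, hH⟩ := exists_umap (n := 2) (P := I) (shrink Y v) (spread Y v)
    (fun _ f hf i j hij => hf (congrArg (fun z => z.1.1) hij))
  have hJm : ∀ x, J x ∈ spread Y v := by
    rintro ⟨u, ⟨q, hq⟩⟩
    obtain ⟨f, rfl⟩ := Quot.exists_rep q
    rw [hJ]
    exact mk_mem_spread.2 f.2
  have hHm : ∀ x, H x ∈ spread Y v := by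
    rintro ⟨u, ⟨q, hq⟩⟩
    obtain ⟨f, rfl⟩ := Quot.exists_rep q
    rw [hH]
    exact mk_mem_spread.2 hq
  let R' : C(spread Y v, UConf 2 Y) := ⟨fun q => R ((), q), by fun_prop⟩
  let J' : C(UConf 2 Y, spread Y v) := ⟨fun q => ⟨J ((), ⟨q, mem_univ q⟩), hJm _⟩, by fun_prop⟩
  let H' : C(I × spread Y v, spread Y v) := ⟨fun q => ⟨H q, hHm _⟩, by fun_prop⟩
  refine ⟨⟨R', J', ⟨⟨H', ?_, ?_⟩⟩, ?_⟩⟩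
  · rintro ⟨q, hq⟩
    obtain ⟨f, rfl⟩ := Quot.exists_rep q
    apply Subtype.ext
    change H (0, _) = J ((), ⟨R ((), _), _⟩)
    simp only [hH, hR, hJ]
    congr 1
    apply Subtype.ext
    ext i : 1
    apply Subtype.ext
    simp [shrink]
  · rintro ⟨q, hq⟩
    obtain ⟨f, rfl⟩ := Quot.exists_rep q
    apply Subtype.ext
    change H (1, _) = _
    rw [hH]
    refine congrArg (Quot.mk _) (Subtype.ext ?_)
    ext i : 1
    apply Subtype.ext
    simp [shrink]
  · have : R'.comp J' = ContinuousMap.id _ := by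
      ext q
      obtain ⟨f, rfl⟩ := Quot.exists_rep q
      change R ((), ⟨J ((), _), _⟩) = _
      simp only [hJ, hR]
      rfl
    rw [this]

/-- Ordered configurations whose second point is strictly higher on the whisker than the first
one, and whose first point projects into `S`. -/
def below (v : Y) (S : Set Y) : Set (Conf 2 (Whisker Y v)) :=
  {f | (f.1 0).1.2 < (f.1 1).1.2 ∧ (f.1 0).1.1 ∈ S}

lemma isOpen_below {S : Set Y} (hS : IsOpen S) : IsOpen (below v S) := by
  have hc : ∀ i : Fin 2, Continuous fun f : Conf 2 (Whisker Y v) => (f.1 i).1 := fun i =>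
    continuous_subtype_val.comp ((continuous_apply i).comp continuous_subtype_val)
  exact (isOpen_lt (continuous_snd.comp (hc 0)) (continuous_snd.comp (hc 1))).inter
    (hS.preimage (continuous_fst.comp (hc 0)))

/-- On `below v S` the order of the two points is determined by their heights. -/
lemma below_injOn {S T : Set Y} {f g : Conf 2 (Whisker Y v)} (hf : f ∈ below v S)
    (hg : g ∈ below v T) (h : Quot.mk (permRel 2 (Whisker Y v)) f = Quot.mk _ g) : f = g := by
  obtain ⟨π, hπ⟩ := uconf_eq.1 h
  have h1 := hf.1
  have h2 := hg.1
  rw [hπ] at h1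
  simp only [Function.comp_apply] at h1
  have h01 : π 0 ≠ π 1 := fun e => by simpa using π.injective e
  have : π 0 = 0 ∧ π 1 = 1 := by
    generalize π 0 = a at *
    generalize π 1 = b at *
    fin_cases a <;> fin_cases b <;> simp_all
    exact absurd h1 h2.le.not_gt
  apply Subtype.ext
  rw [hπ]
  ext i : 1
  fin_cases i
  · simp [this.1]
  · simp [this.2]

lemma isOpenEmbedding_below {S : Set Y} (hS : IsOpen S) :
    IsOpenEmbedding fun f : below v S => Quot.mk (permRel 2 (Whisker Y v)) f.1 :=
  .of_continuous_injective_isOpenMap (continuous_quot_mk.comp continuous_subtype_val)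
    (fun f g h => Subtype.ext (below_injOn f.2 g.2 h))
    (isOpenQuotientMap_mk.isOpenMap.comp (isOpen_below hS).isOpenMap_subtype_val)

/-- A contraction of `S` fixing `v` induces a contraction of `below v S`, pushing the upper point
to the end of the whisker. -/
lemma contractibleSpace_below {S : Set Y} (c : C(I × S, S)) (s₀ : S) (h0 : ∀ y, c (0, y) = y)
    (h1 : ∀ y, c (1, y) = s₀) (hv : ∀ t (y : S), (y : Y) = v → (c (t, y) : Y) = v) :
    ContractibleSpace (below v S) := by
  rw [contractible_iff_id_nullhomotopic]
  have hpos : ∀ f : below v S, (f.1.1 1).1.1 = v := fun f =>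
    Whisker.eq_of_pos _ ((f.1.1 0).2.1.trans_lt f.2.1)
  have hlt : ∀ (t : I) (f : below v S), (1 - t : ℝ) * (f.1.1 0).1.2 <
      (1 - t : ℝ) * (f.1.1 1).1.2 + t := by
    intro t f
    have := f.2.1
    have h2 := (f.1.1 1).2.1
    have h3 := (f.1.1 0).2.1
    rcases eq_or_lt_of_le t.2.1 with h | h
    · rw [← h]; linarith
    · nlinarith [t.2.2]
  let lo : I × below v S → Whisker Y v := fun x =>
    ⟨(c (x.1, ⟨(x.2.1.1 0).1.1, x.2.2.2⟩), (1 - x.1 : ℝ) * (x.2.1.1 0).1.2), by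
      have h3 := (x.2.1.1 0).2.1
      have h4 := (x.2.1.1 0).2.2.1
      have := x.1.2.1
      have := x.1.2.2
      refine ⟨mul_nonneg (by linarith) h3, by dsimp only; nlinarith, ?_⟩
      rcases (x.2.1.1 0).2.2.2 with h | h
      · left; simp [h]
      · right; exact hv _ _ h⟩
  let hi : I × below v S → Whisker Y v := fun x =>
    ⟨(v, (1 - x.1 : ℝ) * (x.2.1.1 1).1.2 + x.1), by
      have h3 := (x.2.1.1 1).2.1
      have h4 := (x.2.1.1 1).2.2.1
      have := x.1.2.1
      have := x.1.2.2
      exact ⟨by dsimp only; nlinarith, by dsimp only; nlinarith, Or.inr rfl⟩⟩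
  have hc : ∀ i : Fin 2, Continuous fun x : I × below v S => (x.2.1.1 i).1 := fun i =>
    continuous_subtype_val.comp ((continuous_apply i).comp (continuous_subtype_val.comp
      (continuous_subtype_val.comp continuous_snd)))
  have hloc : Continuous lo := by
    refine Continuous.subtype_mk (Continuous.prodMk ?_ ?_) _
    · exact continuous_subtype_val.comp (c.continuous.comp (continuous_fst.prodMk
        (Continuous.subtype_mk (continuous_fst.comp (hc 0)) _)))
    · exact (by fun_prop : Continuous fun x : I × below v S => (1 - x.1 : ℝ)).mul
        (continuous_snd.comp (hc 0))
  have hhic : Continuous hi := by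
    refine Continuous.subtype_mk (Continuous.prodMk continuous_const ?_) _
    exact ((by fun_prop : Continuous fun x : I × below v S => (1 - x.1 : ℝ)).mul
        (continuous_snd.comp (hc 1))).add (by fun_prop)
  have hne : ∀ x, (lo x).1.2 < (hi x).1.2 := fun x => hlt x.1 x.2
  let H : C(I × below v S, below v S) := ⟨fun x => ⟨⟨![lo x, hi x], injective_fin2.2 fun e =>
    (hne x).ne (congrArg (fun z : Whisker Y v => z.1.2) e)⟩, hne x, Subtype.coe_prop _⟩, by
      refine Continuous.subtype_mk (Continuous.subtype_mk (continuous_pi fun i => ?_) _) _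
      fin_cases i
      · exact hloc
      · exact hhic⟩
  have hlohi : ∀ f, lo (1, f) = ⟨(s₀, 0), le_rfl, zero_le_one, Or.inl rfl⟩ ∧
      hi (1, f) = ⟨(v, 1), zero_le_one, le_rfl, Or.inr rfl⟩ := fun f => by
    constructor
    · apply Subtype.ext; simp [lo, h1]
    · apply Subtype.ext; simp [hi]
  refine ⟨⟨⟨![⟨(s₀, 0), le_rfl, zero_le_one, Or.inl rfl⟩,
    ⟨(v, 1), zero_le_one, le_rfl, Or.inr rfl⟩], injective_fin2.2 fun e => by simp at e⟩,
    by simp, by simp⟩, ⟨⟨H, fun f => ?_, fun f => ?_⟩⟩⟩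
  · apply Subtype.ext; apply Subtype.ext
    ext i : 1
    apply Subtype.ext
    fin_cases i
    · simp [H, lo, h0]
    · exact Prod.ext (hpos f).symm (by simp [H, hi])
  · apply Subtype.ext; apply Subtype.ext
    ext i : 1
    fin_cases i
    · exact (hlohi f).1
    · exact (hlohi f).2

end Whisker

/-! ### Path-connectedness of the space of unordered pairs -/

section PathConn

open unitInterval Set
open Topology

variable {Y : Type} [TopologicalSpace Y] {v : Y} {κ : Type}

lemma Star.ne_of_mem_arm (S : Star v κ) {k : κ} {y : Y} (h : y ∈ S.arm k) : v ≠ y := by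
  rintro rfl
  exact S.notMem_arm k h

/-- The part of a path between two of its parameters. -/
lemma exists_subpath {a b : Y} (γ : Path a b) (s t : I) :
    ∃ δ : Path (γ s) (γ t), ∀ r, ∃ x ∈ uIcc s t, δ r = γ x := by
  have hs : ((s : ℝ) ∈ Icc (0:ℝ) 1) := s.2
  have hmem : ∀ r : I, (1 - r : ℝ) * s + r * t ∈ uIcc (s : ℝ) t := by
    intro r
    have := (convex_uIcc (s : ℝ) t) left_mem_uIcc right_mem_uIcc
      (by linarith [r.2.2] : (0:ℝ) ≤ 1 - r) r.2.1 (by ring)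
    simpa using this
  have hI : ∀ r : I, (1 - r : ℝ) * s + r * t ∈ Icc (0 : ℝ) 1 := fun r =>
    (uIcc_subset_Icc s.2 t.2) (hmem r)
  refine ⟨⟨⟨fun r => γ ⟨_, hI r⟩, ?_⟩, ?_, ?_⟩, fun r => ⟨⟨_, hI r⟩, ?_, rfl⟩⟩
  · exact γ.continuous.comp (Continuous.subtype_mk (by fun_prop) _)
  · simp
  · simp
  · have := hmem r
    rw [mem_uIcc] at this ⊢
    exact this

/-- Every pair can be moved to a pair containing `v`: on a path from one of its points to `v`,
start from the last point of the pair. -/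
lemma joined_upair_center [T2Space Y] [PathConnectedSpace Y] (v : Y) (q : UConf 2 Y) :
    ∃ c, ∃ h : v ≠ c, Joined q (upair v c h) := by
  obtain ⟨a, b, hab, rfl⟩ := exists_upair q
  obtain ⟨α⟩ := PathConnectedSpace.joined a v
  have hK : IsCompact (α ⁻¹' {a, b}) :=
    ((Set.toFinite {a, b}).isClosed.preimage α.continuous).isCompact
  obtain ⟨T, hT, hmax⟩ := hK.exists_isGreatest ⟨0, by simp⟩
  obtain ⟨δ, hδ⟩ := exists_subpath α T 1
  have hav : ∀ a' b', a' ≠ b' → α T = a' → b' ∈ ({a, b} : Set Y) → ∀ r, δ r ≠ b' := by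
    intro a' b' hne hTa hb' r hr
    obtain ⟨x, hx, hxr⟩ := hδ r
    have h1 : x ≤ T := hmax (show α x ∈ ({a, b} : Set Y) by rw [← hxr, hr]; exact hb')
    rw [uIcc_of_le (show T ≤ 1 from T.2.2)] at hx
    have h2 : x = T := le_antisymm h1 hx.1
    rw [h2, hr] at hxr
    exact hne (hTa.symm.trans hxr.symm)
  have main : ∀ a' b' (hne : a' ≠ b'), α T = a' → b' ∈ ({a, b} : Set Y) →
      ∃ c, ∃ h : v ≠ c, Joined (upair a' b' hne) (upair v c h) := by
    intro a' b' hne hTa hb'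
    have := hav a' b' hne hTa hb'
    subst hTa
    have hj := joined_upair (δ.cast rfl α.target.symm) this
    exact ⟨b', _, hj⟩
  rcases hT with hT | hT
  · exact main a b hab hT (by simp)
  · rw [upair_comm]
    exact main b a hab.symm hT (by simp)

/-- A pair containing `v` can be moved so that its other point is the tip of an arm. -/
lemma joined_upair_tip [T2Space Y] [PathConnectedSpace Y] (S : Star v κ) {c : Y} (h : v ≠ c) :
    ∃ k, ∃ h' : v ≠ S.tip k, Joined (upair v c h) (upair v (S.tip k) h') := by
  obtain ⟨β⟩ := PathConnectedSpace.joined c v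
  have hK : IsCompact (β ⁻¹' {v}) := (isClosed_singleton.preimage β.continuous).isCompact
  obtain ⟨T, hT, hmin⟩ := hK.exists_isLeast ⟨1, by simp⟩
  have hT : β T = v := hT
  have h0 : 0 < T := by
    refine lt_of_le_of_ne T.2.1 fun e => h ?_
    rw [← hT, ← e, β.source]
  -- Just before reaching `v`, the path is in one of the arms.
  obtain ⟨s, hs, hsT⟩ : ∃ s, β s ∈ S.star ∧ s < T := by
    have hn : β ⁻¹' S.star ∈ 𝓝 T := (S.isOpen_star.preimage β.continuous).mem_nhds
      (by rw [mem_preimage, hT, S.mem_star]; exact Or.inl rfl)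
    obtain ⟨l, hl, hsub⟩ := exists_Ioc_subset_of_mem_nhds hn ⟨0, h0⟩
    obtain ⟨s, hs⟩ := exists_between hl
    exact ⟨s, hsub ⟨hs.1, hs.2.le⟩, hs.2⟩
  have hne : ∀ r, r < T → β r ≠ v := fun r hr e => (hmin e).not_gt hr
  obtain ⟨k, hk⟩ := ((S.mem_star _).1 hs).resolve_left (hne s hsT)
  have hvk := S.ne_of_mem_arm (S.tip k).2
  refine ⟨k, hvk, ?_⟩
  obtain ⟨δ, hδ⟩ := exists_subpath β 0 s
  have j1 := joined_upair (b := v) (δ.cast β.source.symm rfl) (fun r => by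
    obtain ⟨x, hx, hxr⟩ := hδ r
    rw [uIcc_of_le (show 0 ≤ s from s.2.1)] at hx
    change δ r ≠ v
    rw [hxr]
    exact hne x (hx.2.trans_lt hsT))
  let ε : Path (β s) (S.tip k) := ⟨⟨fun t => S.armContr k (t, ⟨β s, hk⟩), by fun_prop⟩,
    by simp [S.armContr_zero], by simp [S.armContr_one]⟩
  have j2 := joined_upair (b := v) ε (fun r =>
    (S.ne_of_mem_arm (S.armContr k (r, ⟨β s, hk⟩)).2).symm)
  rw [upair_comm, upair_comm v]
  exact j1.trans j2

lemma pathConnectedSpace_uconf [T2Space Y] [PathConnectedSpace Y] (S : Star v κ)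
    [Nontrivial κ] : PathConnectedSpace (UConf 2 Y) := by
  have hv : ∀ k, v ≠ S.tip k := fun k => S.ne_of_mem_arm (S.tip k).2
  -- The centre and a tip can be exchanged with the centre and any other tip.
  have key : ∀ i j, i ≠ j → Joined (upair v (S.tip i) (hv i)) (upair v (S.tip j) (hv j)) := by
    intro i j hij
    have hl : ∀ i j, i ≠ j → ∀ t, S.leg j t ≠ S.tip i := by
      intro i j hij t e
      rcases eq_or_lt_of_le t.2.1 with h | h
      · have h : t = 0 := Subtype.ext h.symm
        rw [h, Path.source] at e
        exact hv i e
      · exact hij (S.arm_disjoint i j _ (S.tip i).2 (e ▸ S.leg_mem j t h))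
    have j1 := joined_upair (S.leg j) (hl i j hij)
    have j2 := joined_upair (S.leg i) (hl j i hij.symm)
    rw [upair_comm (S.tip i : Y)] at j2
    exact j1.trans j2.symm
  have key' : ∀ i j, Joined (upair v (S.tip i) (hv i)) (upair v (S.tip j) (hv j)) := by
    intro i j
    by_cases h : i = j
    · subst h; exact Joined.refl _
    · exact key i j h
  obtain ⟨k₀⟩ : Nonempty κ := inferInstance
  have all : ∀ q : UConf 2 Y, Joined q (upair v (S.tip k₀) (hv k₀)) := by
    intro q
    obtain ⟨c, h, j1⟩ := joined_upair_center v q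
    obtain ⟨k, h', j2⟩ := joined_upair_tip S h
    exact j1.trans (j2.trans (key' k k₀))
  exact ⟨⟨upair v (S.tip k₀) (hv k₀)⟩, fun p q => (all p).trans (all q).symm⟩

end PathConn

/-! ### Braids on a space with a whisker -/

section Main

open unitInterval Set
open Topology

variable {Y : Type} [TopologicalSpace Y] {v : Y} {κ : Type}

/-- Configurations with one point strictly higher on the whisker than the other one, the lower
one projecting into `S`. -/
def ubelow (v : Y) (S : Set Y) : Set (UConf 2 (Whisker Y v)) :=
  range fun f : below v S => Quot.mk (permRel 2 (Whisker Y v)) f.1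

lemma simplyConnectedSpace_ubelow {S : Set Y} (hS : IsOpen S) (c : C(I × S, S)) (s₀ : S)
    (h0 : ∀ y, c (0, y) = y) (h1 : ∀ y, c (1, y) = s₀)
    (hv : ∀ t (y : S), (y : Y) = v → (c (t, y) : Y) = v) :
    SimplyConnectedSpace (ubelow v S) := by
  have := contractibleSpace_below c s₀ h0 h1 hv
  have : ContractibleSpace (ubelow v S) :=
    (isOpenEmbedding_below hS).isEmbedding.toHomeomorph.symm.contractibleSpace
  infer_instance

/-- A configuration whose two points have distinct heights lies in `ubelow`, up to the order of
its points. -/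
lemma mk_mem_ubelow {S : Set Y} {f : Conf 2 (Whisker Y v)} (h : (f.1 0).1.2 ≠ (f.1 1).1.2)
    (hS : ∀ i, (f.1 i).1.1 ∈ S) : Quot.mk _ f ∈ ubelow v S := by
  rcases lt_or_gt_of_ne h with h | h
  · exact ⟨⟨f, h, hS 0⟩, rfl⟩
  · exact ⟨⟨relabel (Equiv.swap 0 1) f, by simpa [relabel] using h, hS _⟩,
      uconf_eq.2 ⟨Equiv.swap 0 1, rfl⟩⟩

/-- A homotopy equivalence with a path-connected target induces isomorphisms of fundamental
groups, whatever the base points. -/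
lemma nonempty_mulEquiv_of_homotopyEquiv {A B : Type} [TopologicalSpace A] [TopologicalSpace B]
    [PathConnectedSpace B] (e : ContinuousMap.HomotopyEquiv A B) (a : A) (b : B) :
    Nonempty (FundamentalGroup A a ≃* FundamentalGroup B b) := by
  let E : FundamentalGroupoid A ≌ FundamentalGroupoid B :=
    FundamentalGroupoidFunctor.equivOfHomotopyEquiv e
  let φ : FundamentalGroup A a ≃* _ :=
    E.fullyFaithfulFunctor.mulEquivEnd (FundamentalGroupoid.mk a)
  exact ⟨φ.trans (FundamentalGroup.fundamentalGroupMulEquivOfPathConnected (X := B) _ b)⟩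

lemma pathConnectedSpace_of_homotopyEquiv {A B : Type} [TopologicalSpace A] [TopologicalSpace B]
    [PathConnectedSpace B] (e : ContinuousMap.HomotopyEquiv A B) : PathConnectedSpace A := by
  obtain ⟨H⟩ := e.left_inv
  have h : ∀ a, Joined (e.invFun (e.toFun a)) a := fun a =>
    ⟨⟨⟨fun t => H (t, a), by fun_prop⟩, by simp, by simp⟩⟩
  refine ⟨⟨e.invFun (Classical.arbitrary B)⟩, fun a a' => ?_⟩
  exact (h a).symm.trans (((PathConnectedSpace.joined (e.toFun a) (e.toFun a')).map
    e.invFun.continuous).trans (h a'))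

/-- The space of pairs of points of the whiskered space is the union of `spread`, which is
homotopy equivalent to the space of pairs of points of `Y`, and of the simply connected set of
the pairs with distinct heights lying over the star; they meet along one simply connected piece
for each arm. -/
theorem nonempty_mulEquiv_whisker [T2Space Y] [PathConnectedSpace Y] [Nontrivial κ]
    (S : Star v κ) (k₀ : κ) (x' : UConf 2 (Whisker Y v)) (x : UConf 2 Y) :
    Nonempty (FundamentalGroup (UConf 2 (Whisker Y v)) x' ≃*
      Monoid.Coprod (FundamentalGroup (UConf 2 Y) x) (FreeGroup {k // k ≠ k₀})) := by
  have := pathConnectedSpace_uconf S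
  obtain ⟨e⟩ := nonempty_spread_homotopyEquiv (Y := Y) (v := v)
  have hU := pathConnectedSpace_of_homotopyEquiv e
  have hvS : v ∈ S.star := (S.mem_star v).2 (Or.inl rfl)
  have hW : SimplyConnectedSpace (ubelow v S.star) :=
    simplyConnectedSpace_ubelow S.isOpen_star S.contr ⟨v, hvS⟩ S.contr_zero
      (fun y => Subtype.ext (S.contr_one y)) S.contr_fix
  have hO : ∀ k, SimplyConnectedSpace (ubelow v (S.arm k)) := fun k =>
    simplyConnectedSpace_ubelow (S.isOpen_arm k) (S.armContr k) (S.tip k) (S.armContr_zero k)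
      (S.armContr_one k) (fun t y h => absurd h.symm (S.ne_of_mem_arm y.2))
  have hUW : spread Y v ∪ ubelow v S.star = univ := by
    refine eq_univ_of_forall fun q => or_iff_not_imp_left.2 fun hq => ?_
    obtain ⟨f, rfl⟩ := Quot.exists_rep q
    rw [mk_mem_spread, injective_fin2, not_not] at hq
    have hne : (f.1 0).1.2 ≠ (f.1 1).1.2 := fun h =>
      injective_fin2.1 f.2 (Subtype.ext (Prod.ext hq h))
    -- The upper one of the two points lies on the whisker, hence above `v`.
    have h0 : (f.1 0).1.1 = v := by
      rcases lt_or_gt_of_ne hne with h | h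
      · rw [hq]; exact Whisker.eq_of_pos _ ((f.1 0).2.1.trans_lt h)
      · exact Whisker.eq_of_pos _ ((f.1 1).2.1.trans_lt h)
    refine mk_mem_ubelow hne fun i => ?_
    have : (f.1 i).1.1 = v := by
      fin_cases i
      · exact h0
      · exact hq.symm.trans h0
    rwa [this]
  have hdisj : ∀ k l q, q ∈ ubelow v (S.arm k) → q ∈ ubelow v (S.arm l) → k = l := by
    rintro k l _ ⟨f, rfl⟩ ⟨g, hg⟩
    have := below_injOn g.2 f.2 hg
    exact S.arm_disjoint k l _ f.2.2 (this ▸ g.2.2)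
  have hOUW : ⋃ k, ubelow v (S.arm k) = spread Y v ∩ ubelow v S.star := by
    have hv : ∀ f : Conf 2 (Whisker Y v), (f.1 0).1.2 < (f.1 1).1.2 → (f.1 1).1.1 = v :=
      fun f hf => Whisker.eq_of_pos _ ((f.1 0).2.1.trans_lt hf)
    ext q
    simp only [mem_iUnion, mem_inter_iff]
    constructor
    · rintro ⟨k, f, rfl⟩
      refine ⟨mk_mem_spread.2 (injective_fin2.2 ?_),
        ⟨⟨f.1, f.2.1, (S.mem_star _).2 (Or.inr ⟨k, f.2.2⟩)⟩, rfl⟩⟩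
      rw [hv _ f.2.1]
      exact (S.ne_of_mem_arm f.2.2).symm
    · rintro ⟨hq, f, rfl⟩
      have hq := injective_fin2.1 (mk_mem_spread.1 hq)
      rw [hv _ f.2.1] at hq
      obtain ⟨k, hk⟩ := ((S.mem_star _).1 f.2.2).resolve_left hq
      exact ⟨k, ⟨f.1, f.2.1, hk⟩, rfl⟩
  have hWo : IsOpen (ubelow v S.star) := (isOpenEmbedding_below S.isOpen_star).isOpen_range
  have hOo : ∀ k, IsOpen (ubelow v (S.arm k)) := fun k =>
    (isOpenEmbedding_below (S.isOpen_arm k)).isOpen_range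
  obtain ⟨u₀, ⟨φ⟩⟩ := fundamentalGroup_union k₀ (spread Y v) (ubelow v S.star)
    (fun k => ubelow v (S.arm k)) isOpen_spread hWo hUW hOo hdisj hOUW
  have hX : PathConnectedSpace (UConf 2 (Whisker Y v)) := by
    rw [pathConnectedSpace_iff_univ, ← hUW]
    have hk : IsPathConnected (ubelow v (S.arm k₀)) := isPathConnected_iff_pathConnectedSpace.2
      inferInstance
    refine (isPathConnected_iff_pathConnectedSpace.2 hU).union
      (isPathConnected_iff_pathConnectedSpace.2 inferInstance) ?_
    rw [← hOUW]
    exact hk.nonempty.mono (subset_iUnion (fun k => ubelow v (S.arm k)) k₀)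
  obtain ⟨ψ⟩ := nonempty_mulEquiv_of_homotopyEquiv e u₀ x
  exact ⟨(FundamentalGroup.fundamentalGroupMulEquivOfPathConnected x' u₀.1).trans
    (φ.trans (MulEquiv.coprodCongr ψ (MulEquiv.refl _)))⟩

end Main

/-! ### Realizations of graphs -/

section Realization

open unitInterval Set
open Topology

variable {V : Type} [DecidableEq V] {G : SimpleGraph V}

lemma basisVec_self (a : V) : basisVec a a = 1 := if_pos rfl

lemma basisVec_ne {a b : V} (h : b ≠ a) : basisVec a b = 0 := if_neg h

/-- Barycentric coordinates on an edge. -/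
lemma mem_segment_basisVec {a b : V} (hab : a ≠ b) {y : V → ℝ} :
    y ∈ segment ℝ (basisVec a) (basisVec b) ↔
      0 ≤ y a ∧ 0 ≤ y b ∧ y a + y b = 1 ∧ ∀ c, c ≠ a → c ≠ b → y c = 0 := by
  constructor
  · rintro ⟨s, t, hs, ht, hst, rfl⟩
    simp only [Pi.add_apply, Pi.smul_apply, basisVec_self, basisVec_ne hab, basisVec_ne hab.symm,
      smul_eq_mul, mul_one, mul_zero, add_zero, zero_add]
    exact ⟨hs, ht, hst, fun c ha hb => by simp [basisVec_ne ha, basisVec_ne hb]⟩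
  · rintro ⟨ha, hb, h1, hc⟩
    refine ⟨y a, y b, ha, hb, h1, ?_⟩
    ext c
    by_cases hca : c = a
    · subst hca; simp [basisVec_self, basisVec_ne hab]
    by_cases hcb : c = b
    · subst hcb; simp [basisVec_self, basisVec_ne hab.symm]
    · simp [basisVec_ne hca, basisVec_ne hcb, hc c hca hcb]

lemma mem_realization {y : V → ℝ} :
    y ∈ realization G ↔ ∃ a b, G.Adj a b ∧ y ∈ segment ℝ (basisVec a) (basisVec b) := by
  simp [realization]

lemma segment_subset_realization {a b : V} (h : G.Adj a b) :
    segment ℝ (basisVec a) (basisVec b) ⊆ realization G := fun _ hy =>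
  mem_realization.2 ⟨a, b, h, hy⟩

lemma basisVec_mem_realization {a b : V} (h : G.Adj a b) : basisVec a ∈ realization G :=
  segment_subset_realization h (left_mem_segment ℝ _ _)

/-- A point with a positive coordinate at `a` lies on an edge at `a`. -/
lemma exists_edge_of_pos {a : V} {y : V → ℝ} (hy : y ∈ realization G) (ha : 0 < y a) :
    ∃ b, G.Adj a b ∧ y ∈ segment ℝ (basisVec a) (basisVec b) := by
  obtain ⟨c, d, h, hs⟩ := mem_realization.1 hy
  have hz := ((mem_segment_basisVec h.ne).1 hs).2.2.2 a
  by_cases hc : a = c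
  · subst hc; exact ⟨d, h, hs⟩
  by_cases hd : a = d
  · subst hd; exact ⟨c, h.symm, by rwa [segment_symm]⟩
  · exact absurd (hz hc hd) ha.ne'

/-- A point with two positive coordinates lies on the corresponding edge. -/
lemma mem_edge_of_pos {a b : V} (hab : a ≠ b) {y : V → ℝ} (hy : y ∈ realization G)
    (ha : 0 < y a) (hb : 0 < y b) :
    G.Adj a b ∧ y ∈ segment ℝ (basisVec a) (basisVec b) := by
  obtain ⟨c, h, hs⟩ := exists_edge_of_pos hy ha
  have hz := ((mem_segment_basisVec h.ne).1 hs).2.2.2 b hab.symm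
  by_cases hc : b = c
  · subst hc; exact ⟨h, hs⟩
  · exact absurd (hz hc) hb.ne'

lemma isCompact_realization [Finite V] : IsCompact (realization G) := by
  refine isCompact_iUnion fun u => isCompact_iUnion fun w => isCompact_iUnion fun _ => ?_
  rw [segment_eq_image]
  exact isCompact_Icc.image (by fun_prop)

lemma joinedIn_segment {a b : V} (h : G.Adj a b) {y : V → ℝ}
    (hy : y ∈ segment ℝ (basisVec a) (basisVec b)) : JoinedIn (realization G) y (basisVec a) :=
  ((convex_segment _ _).isPathConnected ⟨_, hy⟩ |>.joinedIn _ hy _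
    (left_mem_segment ℝ _ _)).mono (segment_subset_realization h)

lemma isPathConnected_realization (hG : G.Connected) {a b : V} (hab : G.Adj a b) :
    IsPathConnected (realization G) := by
  have hw : ∀ c d, G.Walk c d → (∃ e, G.Adj c e) →
      JoinedIn (realization G) (basisVec c) (basisVec d) := by
    intro c d w
    induction w with
    | nil => rintro ⟨e, he⟩; exact JoinedIn.refl (basisVec_mem_realization he)
    | cons h p ih =>
      exact fun _ => (joinedIn_segment h (right_mem_segment ℝ _ _)).symm.trans (ih ⟨_, h.symm⟩)
  refine ⟨basisVec a, basisVec_mem_realization hab, fun {y} hy => ?_⟩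
  obtain ⟨c, d, h, hs⟩ := mem_realization.1 hy
  obtain ⟨w⟩ := hG.preconnected a c
  exact (hw a c w ⟨b, hab⟩).trans (joinedIn_segment h hs).symm

/-- The straight-line contraction of a star-shaped subset of a realization. -/
def lineContr (A : Set (realization G)) (p : A)
    (h : ∀ y ∈ A, ∀ t : I, ∃ hz : (1 - t : ℝ) • y.1 + (t : ℝ) • p.1.1 ∈ realization G,
      (⟨_, hz⟩ : realization G) ∈ A) : C(I × A, A) where
  toFun x := ⟨⟨(1 - x.1 : ℝ) • x.2.1.1 + (x.1 : ℝ) • p.1.1, (h _ x.2.2 x.1).1⟩, (h _ x.2.2 x.1).2⟩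
  continuous_toFun := by fun_prop

/-- The vertex `v`, as a point of the realization. -/
def vertexPt {v w : V} (h : G.Adj v w) : realization G :=
  ⟨basisVec v, basisVec_mem_realization h⟩

lemma mid_mem {v u : V} : ((1 / 2 : ℝ) • basisVec v + (1 / 2 : ℝ) • basisVec u : V → ℝ) ∈
    segment ℝ (basisVec v) (basisVec u) :=
  ⟨1 / 2, 1 / 2, by norm_num, by norm_num, by norm_num, rfl⟩

lemma line_mem {E : Type*} [AddCommGroup E] [Module ℝ E] {a b y p : E} (hy : y ∈ segment ℝ a b)
    (hp : p ∈ segment ℝ a b) (t : I) : (1 - t : ℝ) • y + (t : ℝ) • p ∈ segment ℝ a b :=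
  (convex_segment a b) hy hp (by linarith [t.2.2]) t.2.1 (by ring)

lemma line_pos {a b : ℝ} (ha : 0 < a) (hb : 0 < b) (t : I) : 0 < (1 - t : ℝ) * a + t * b := by
  rcases eq_or_lt_of_le t.2.1 with h | h
  · rw [← h]; simpa
  · nlinarith [t.2.2]

/-- The open star of a vertex `v` in the realization of a graph, with one arm for each
neighbour of `v`. -/
def vertexStar {v w : V} (h : G.Adj v w) : Star (vertexPt h) (G.neighborSet v) := by
  have hstar : ∀ y ∈ {y : realization G | 0 < y.1 v}, ∀ t : I,
      ∃ hz : (1 - t : ℝ) • y.1 + (t : ℝ) • basisVec v ∈ realization G,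
        (⟨_, hz⟩ : realization G) ∈ {y : realization G | 0 < y.1 v} := by
    intro y hy t
    obtain ⟨b, hb, hs⟩ := exists_edge_of_pos y.2 hy
    refine ⟨segment_subset_realization hb (line_mem hs (left_mem_segment ℝ _ _) t), ?_⟩
    simpa using line_pos hy (show 0 < basisVec v v by simp [basisVec_self]) t
  have hmidv : ∀ u : G.neighborSet v,
      ((1 / 2 : ℝ) • basisVec v + (1 / 2 : ℝ) • basisVec u.1 : V → ℝ) v = 1 / 2 := fun u => by
    simp [basisVec_self, basisVec_ne u.2.ne]
  have hmidu : ∀ u : G.neighborSet v,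
      ((1 / 2 : ℝ) • basisVec v + (1 / 2 : ℝ) • basisVec u.1 : V → ℝ) u.1 = 1 / 2 := fun u => by
    simp [basisVec_self, basisVec_ne u.2.ne.symm]
  let mid : ∀ u : G.neighborSet v, {y : realization G | 0 < y.1 v ∧ 0 < y.1 u} := fun u =>
    ⟨⟨(1 / 2 : ℝ) • basisVec v + (1 / 2 : ℝ) • basisVec u.1,
      segment_subset_realization u.2 mid_mem⟩, by
        exact ⟨one_half_pos.trans_eq (hmidv u).symm, one_half_pos.trans_eq (hmidu u).symm⟩⟩
  have harm : ∀ u : G.neighborSet v, ∀ y ∈ {y : realization G | 0 < y.1 v ∧ 0 < y.1 u}, ∀ t : I,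
      ∃ hz : (1 - t : ℝ) • y.1 + (t : ℝ) • (mid u).1.1 ∈ realization G,
        (⟨_, hz⟩ : realization G) ∈ {y : realization G | 0 < y.1 v ∧ 0 < y.1 u} := by
    intro u y hy t
    refine ⟨segment_subset_realization u.2
      (line_mem (mem_edge_of_pos u.2.ne y.2 hy.1 hy.2).2 mid_mem t), ?_, ?_⟩
    · exact line_pos hy.1 (mid u).2.1 t
    · exact line_pos hy.2 (mid u).2.2 t
  have hc : ∀ u : V, Continuous fun y : realization G => y.1 u := fun u =>
    (continuous_apply u).comp continuous_subtype_val
  exact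
  { arm u := {y | 0 < y.1 v ∧ 0 < y.1 u}
    star := {y | 0 < y.1 v}
    isOpen_arm u := (isOpen_lt continuous_const (hc v)).inter (isOpen_lt continuous_const (hc u))
    isOpen_star := isOpen_lt continuous_const (hc v)
    arm_disjoint := by
      rintro k l y ⟨h1, h2⟩ ⟨-, h3⟩
      have hs := (mem_edge_of_pos k.2.ne y.2 h1 h2).2
      have hz := ((mem_segment_basisVec k.2.ne).1 hs).2.2.2 l l.2.ne.symm
      by_contra hkl
      exact h3.ne' (hz fun e => hkl (Subtype.ext e.symm))
    notMem_arm := by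
      rintro k ⟨-, h2⟩
      simp [vertexPt, basisVec_ne k.2.ne.symm] at h2
    mem_star := by
      intro y
      constructor
      · intro hy
        obtain ⟨b, hb, hs⟩ := exists_edge_of_pos y.2 hy
        obtain ⟨-, h2, h3, h4⟩ := (mem_segment_basisVec hb.ne).1 hs
        rcases eq_or_lt_of_le h2 with h | h
        · left
          apply Subtype.ext
          ext c
          by_cases hc : c = v
          · subst hc
            simp only [vertexPt, basisVec_self]; linarith
          · simp only [vertexPt, basisVec_ne hc]
            by_cases hcb : c = b
            · rw [hcb, ← h]
            · exact h4 c hc hcb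
        · exact Or.inr ⟨⟨b, hb⟩, hy, h⟩
      · rintro (rfl | ⟨k, hk⟩)
        · simp [vertexPt, basisVec_self]
        · exact hk.1
    contr := lineContr _ ⟨vertexPt h, by simp [vertexPt, basisVec_self]⟩ hstar
    contr_zero y := by
      apply Subtype.ext; apply Subtype.ext; simp [lineContr]
    contr_one y := by
      apply Subtype.ext; simp [lineContr]
    contr_fix t y hy := by
      apply Subtype.ext
      simp only [lineContr, ContinuousMap.coe_mk, hy, ← add_smul]
      simp
    tip := mid
    armContr u := lineContr _ (mid u) (harm u)
    armContr_zero u y := by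
      apply Subtype.ext; apply Subtype.ext; simp [lineContr]
    armContr_one u y := by
      apply Subtype.ext; apply Subtype.ext; simp [lineContr]
    leg u :=
      { toFun t := ⟨(1 - t : ℝ) • basisVec v + (t : ℝ) • (mid u).1.1,
          segment_subset_realization u.2 (line_mem (left_mem_segment ℝ _ _) mid_mem t)⟩
        continuous_toFun := by fun_prop
        source' := by apply Subtype.ext; simp [vertexPt]
        target' := by apply Subtype.ext; simp }
    leg_mem u t ht := by
      have ht' : (0 : ℝ) < t := ht
      constructor
      · exact line_pos (by simp [basisVec_self]) (mid u).2.1 t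
      · change 0 < (1 - t : ℝ) * basisVec v u.1 + t * (mid u).1.1 u.1
        rw [basisVec_ne u.2.ne.symm, mul_zero, zero_add]
        exact mul_pos ht' (mid u).2.2 }

end Realization

/-! ### Attaching a path to a graph -/

section AttachPath

open unitInterval Set
open Topology

variable {V : Type} [DecidableEq V] {Γ : SimpleGraph V} {v : V} {m : ℕ}

lemma attachPath_adj_inl {a b : V} (h : Γ.Adj a b) :
    (attachPath Γ v m).Adj (Sum.inl a) (Sum.inl b) := by
  rw [attachPath, SimpleGraph.fromEdgeSet_adj]
  exact ⟨Or.inl (Or.inl ⟨a, b, h, rfl⟩), fun e => h.ne (Sum.inl.inj e)⟩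

lemma attachPath_adj_zero (hm : 0 < m) :
    (attachPath Γ v m).Adj (Sum.inl v) (Sum.inr ⟨0, hm⟩) := by
  rw [attachPath, SimpleGraph.fromEdgeSet_adj]
  exact ⟨Or.inl (Or.inr ⟨hm, rfl⟩), by simp⟩

lemma attachPath_adj_succ {i j : Fin m} (h : (i : ℕ) + 1 = j) :
    (attachPath Γ v m).Adj (Sum.inr i) (Sum.inr j) := by
  rw [attachPath, SimpleGraph.fromEdgeSet_adj]
  refine ⟨Or.inr ⟨i, j, h, rfl⟩, fun e => ?_⟩
  have := Sum.inr.inj e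
  subst this
  omega

/-- The points of the realization are those of the edges of `Γ`, of the first edge of the path,
and of the other edges of the path. -/
lemma attachPath_induction {P : (V ⊕ Fin m → ℝ) → Prop}
    (h1 : ∀ a b, Γ.Adj a b → ∀ s t : ℝ, 0 ≤ s → 0 ≤ t → s + t = 1 →
      P (s • basisVec (Sum.inl a) + t • basisVec (Sum.inl b)))
    (h2 : ∀ hm : 0 < m, ∀ s t : ℝ, 0 ≤ s → 0 ≤ t → s + t = 1 →
      P (s • basisVec (Sum.inl v) + t • basisVec (Sum.inr ⟨0, hm⟩)))
    (h3 : ∀ i j : Fin m, (i : ℕ) + 1 = j → ∀ s t : ℝ, 0 ≤ s → 0 ≤ t → s + t = 1 →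
      P (s • basisVec (Sum.inr i) + t • basisVec (Sum.inr j)))
    (p : V ⊕ Fin m → ℝ) (hp : p ∈ realization (attachPath Γ v m)) : P p := by
  obtain ⟨x, y, hxy, s, t, hs, ht, hst, rfl⟩ := mem_realization.1 hp
  have hst' : t + s = 1 := by linarith
  rw [attachPath, SimpleGraph.fromEdgeSet_adj] at hxy
  rcases hxy.1 with (⟨a, b, h, e⟩ | ⟨hm, e⟩) | ⟨i, j, h, e⟩
  · rcases Sym2.eq_iff.1 e with ⟨rfl, rfl⟩ | ⟨rfl, rfl⟩
    · exact h1 a b h s t hs ht hst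
    · rw [add_comm]; exact h1 a b h t s ht hs hst'
  · rcases Sym2.eq_iff.1 e with ⟨rfl, rfl⟩ | ⟨rfl, rfl⟩
    · exact h2 hm s t hs ht hst
    · rw [add_comm]; exact h2 hm t s ht hs hst'
  · rcases Sym2.eq_iff.1 e with ⟨rfl, rfl⟩ | ⟨rfl, rfl⟩
    · exact h3 i j h s t hs ht hst
    · rw [add_comm]; exact h3 i j h t s ht hs hst'

/-- The linear map folding the attached path onto the vertex `v`. -/
def fold (v : V) (m : ℕ) : (V ⊕ Fin m → ℝ) →ₗ[ℝ] (V → ℝ) where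
  toFun p := fun u => p (Sum.inl u) + basisVec v u * ∑ j, p (Sum.inr j)
  map_add' p q := by
    ext u; simp only [Pi.add_apply, Finset.sum_add_distrib]; ring
  map_smul' c p := by
    ext u; simp only [Pi.smul_apply, smul_eq_mul, RingHom.id_apply, ← Finset.mul_sum]; ring

/-- The position along the attached path, as a number of edges. -/
def height (V : Type) (m : ℕ) : (V ⊕ Fin m → ℝ) →ₗ[ℝ] ℝ where
  toFun p := ∑ j : Fin m, ((j : ℝ) + 1) * p (Sum.inr j)
  map_add' p q := by simp only [Pi.add_apply, mul_add, Finset.sum_add_distrib]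
  map_smul' c p := by
    simp only [Pi.smul_apply, smul_eq_mul, RingHom.id_apply, Finset.mul_sum]
    exact Finset.sum_congr rfl fun j _ => by ring

lemma basisVec_inl_inl (a u : V) :
    basisVec (Sum.inl a : V ⊕ Fin m) (Sum.inl u) = basisVec a u := by
  simp [basisVec]

lemma basisVec_inl_inr (a : V) (j : Fin m) :
    basisVec (Sum.inl a : V ⊕ Fin m) (Sum.inr j) = 0 := by
  simp [basisVec]

lemma basisVec_inr_inl (u : V) (j : Fin m) :
    basisVec (Sum.inr j : V ⊕ Fin m) (Sum.inl u) = 0 := by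
  simp [basisVec]

lemma basisVec_inr_inr (i j : Fin m) :
    basisVec (Sum.inr i : V ⊕ Fin m) (Sum.inr j) = if j = i then 1 else 0 := by
  simp [basisVec]

lemma fold_inl (a : V) : fold v m (basisVec (Sum.inl a)) = basisVec a := by
  ext u; simp [fold, basisVec_inl_inl, basisVec_inl_inr]

lemma fold_inr (j : Fin m) : fold v m (basisVec (Sum.inr j)) = basisVec v := by
  ext u; simp [fold, basisVec_inr_inl, basisVec_inr_inr]

lemma height_inl (a : V) : height V m (basisVec (Sum.inl a)) = 0 := by
  simp [height, basisVec_inl_inr]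

lemma height_inr (j : Fin m) : height V m (basisVec (Sum.inr j)) = j + 1 := by
  simp [height, basisVec_inr_inr]

/-- The coordinates on the path are tent functions of the height. -/
lemma apply_inr_eq (p : V ⊕ Fin m → ℝ) (hp : p ∈ realization (attachPath Γ v m)) (k : Fin m) :
    p (Sum.inr k) = max 0 (1 - |height V m p - (k + 1)|) := by
  revert k
  refine attachPath_induction (P := fun p => ∀ k, p (Sum.inr k) =
    max 0 (1 - |height V m p - (k + 1)|)) ?_ ?_ ?_ p hp
  · intro a b _ s t _ _ _ k
    have hk : (0 : ℝ) ≤ k := by positivity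
    simp only [map_add, map_smul, height_inl, Pi.add_apply, Pi.smul_apply, basisVec_inl_inr]
    rw [max_eq_left]
    · simp
    · rw [abs_of_nonpos (by simp; linarith)]; simp
  · intro hm s t hs ht hst k
    simp only [map_add, map_smul, height_inl, height_inr, Pi.add_apply, Pi.smul_apply,
      basisVec_inl_inr, basisVec_inr_inr]
    by_cases hk : k = ⟨0, hm⟩
    · subst hk
      simp only [smul_eq_mul, mul_zero, Nat.cast_zero, zero_add, mul_one, if_true]
      rw [abs_of_nonpos (by linarith), max_eq_right (by linarith)]; ring
    · have : 1 ≤ (k : ℕ) := by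
        by_contra h
        exact hk (Fin.ext (by simp; omega))
      have : (1 : ℝ) ≤ k := by exact_mod_cast this
      simp only [smul_eq_mul, mul_zero, Nat.cast_zero, zero_add, mul_one, hk, if_false]
      rw [abs_of_nonpos (by linarith), max_eq_left (by linarith)]
  · intro i j hij s t hs ht hst k
    simp only [map_add, map_smul, height_inr, Pi.add_apply, Pi.smul_apply, basisVec_inr_inr]
    have hj : (j : ℝ) = i + 1 := by exact_mod_cast hij.symm
    have hh : s • ((i : ℝ) + 1) + t • ((j : ℝ) + 1) - (k + 1) = i + t - k := by
      rw [hj, smul_eq_mul, smul_eq_mul]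
      linear_combination (i + 1 : ℝ) * hst
    rw [hh]
    rcases lt_trichotomy (k : ℕ) i with hk | hk | hk
    · have h1 : k ≠ i := fun e => by rw [e] at hk; omega
      have h2 : k ≠ j := fun e => by rw [e] at hk; omega
      have : (k : ℝ) + 1 ≤ i := by exact_mod_cast hk
      rw [abs_of_nonneg (by linarith), max_eq_left (by linarith)]
      simp [h1, h2]
    · have h1 : k = i := Fin.ext hk
      subst h1
      have h2 : k ≠ j := fun e => by rw [e] at hij; omega
      rw [abs_of_nonneg (by linarith), max_eq_right (by linarith)]
      simp [h2]; linarith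
    · have h1 : k ≠ i := fun e => by rw [e] at hk; omega
      by_cases h2 : k = j
      · subst h2
        rw [abs_of_nonpos (by linarith), max_eq_right (by linarith)]
        simp [h1]; linarith
      · have : (k : ℕ) ≠ j := fun e => h2 (Fin.ext e)
        have : (i : ℕ) + 2 ≤ k := by omega
        have : (i : ℝ) + 2 ≤ k := by exact_mod_cast this
        rw [abs_of_nonpos (by linarith), max_eq_left (by linarith)]
        simp [h1, h2]

/-- The folded point lies in the realization of `Γ`, and the whisker condition holds. -/
lemma fold_height_mem {w : V} (hvw : Γ.Adj v w) (p : V ⊕ Fin m → ℝ)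
    (hp : p ∈ realization (attachPath Γ v m)) :
    fold v m p ∈ realization Γ ∧ 0 ≤ height V m p ∧ height V m p ≤ m ∧
      (height V m p = 0 ∨ fold v m p = basisVec v) := by
  refine attachPath_induction (P := fun p => fold v m p ∈ realization Γ ∧ 0 ≤ height V m p ∧
    height V m p ≤ m ∧ (height V m p = 0 ∨ fold v m p = basisVec v)) ?_ ?_ ?_ p hp
  · intro a b h s t hs ht hst
    simp only [map_add, map_smul, height_inl, fold_inl]
    exact ⟨segment_subset_realization h ⟨s, t, hs, ht, hst, rfl⟩, by simp, by simp, by simp⟩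
  · intro hm s t hs ht hst
    simp only [map_add, map_smul, height_inl, height_inr, fold_inl, fold_inr, ← add_smul, hst,
      one_smul, or_true, and_true]
    have : (1 : ℝ) ≤ m := by exact_mod_cast hm
    refine ⟨basisVec_mem_realization hvw, ?_, ?_⟩
    · simpa
    · simp; linarith
  · intro i j hij s t hs ht hst
    simp only [map_add, map_smul, height_inr, fold_inr, ← add_smul, hst,
      one_smul, or_true, and_true]
    have hi : (i : ℝ) + 1 ≤ m := by exact_mod_cast i.2
    have hj : (j : ℝ) + 1 ≤ m := by exact_mod_cast j.2
    refine ⟨basisVec_mem_realization hvw, ?_, ?_⟩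
    · simp only [smul_eq_mul]; positivity
    · simp only [smul_eq_mul]; nlinarith

/-- Attaching a path to a graph attaches a whisker to its realization. -/
lemma nonempty_homeo_whisker [Finite V] {w : V} (hvw : Γ.Adj v w) (hm : 1 ≤ m) :
    Nonempty (realization (attachPath Γ v m) ≃ₜ Whisker (realization Γ) (vertexPt hvw)) := by
  have hm0 : (0 : ℝ) < m := by exact_mod_cast hm
  let F : realization (attachPath Γ v m) → Whisker (realization Γ) (vertexPt hvw) := fun p =>
    have h := fold_height_mem hvw p.1 p.2
    ⟨(⟨fold v m p.1, h.1⟩, height V m p.1 / m), div_nonneg h.2.1 hm0.le,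
      (div_le_one hm0).2 h.2.2.1, h.2.2.2.imp (fun e => by simp [e]) (fun e => Subtype.ext e)⟩
  have hF : Continuous F := by
    have h1 : Continuous (fold v m) := LinearMap.continuous_of_finiteDimensional _
    have h2 : Continuous (height V m) := LinearMap.continuous_of_finiteDimensional _
    refine Continuous.subtype_mk (Continuous.prodMk (Continuous.subtype_mk
      (h1.comp continuous_subtype_val) _) ((h2.comp continuous_subtype_val).div_const _)) _
  have hinj : Function.Injective F := by
    intro p q hpq
    have e1 : fold v m p.1 = fold v m q.1 :=
      congrArg (fun z : Whisker (realization Γ) (vertexPt hvw) => z.1.1.1) hpq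
    have e2 : height V m p.1 = height V m q.1 := by
      have : height V m p.1 / m = height V m q.1 / m :=
        congrArg (fun z : Whisker (realization Γ) (vertexPt hvw) => z.1.2) hpq
      exact (div_left_inj' hm0.ne').1 this
    have e3 : ∀ k, p.1 (Sum.inr k) = q.1 (Sum.inr k) := fun k => by
      rw [apply_inr_eq p.1 p.2, apply_inr_eq q.1 q.2, e2]
    apply Subtype.ext
    ext x
    rcases x with u | k
    · have := congrFun e1 u
      simp only [fold, LinearMap.coe_mk, AddHom.coe_mk, e3] at this
      exact add_right_cancel this
    · exact e3 k
  have hsurj : Function.Surjective F := by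
    rintro ⟨⟨⟨y, hy⟩, h⟩, h0, h1, h2⟩
    suffices ∃ p ∈ realization (attachPath Γ v m), fold v m p = y ∧ height V m p = m * h by
      obtain ⟨p, hp, e1, e2⟩ := this
      refine ⟨⟨p, hp⟩, Subtype.ext (Prod.ext (Subtype.ext e1) ?_)⟩
      change height V m p / m = h
      rw [e2]; field_simp
    dsimp only at h0 h1 h2
    rcases h2 with rfl | h2
    · obtain ⟨a, b, hab, s, t, hs, ht, hst, rfl⟩ := mem_realization.1 hy
      refine ⟨_, segment_subset_realization (attachPath_adj_inl hab) ⟨s, t, hs, ht, hst, rfl⟩,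
        ?_, ?_⟩
      · simp [fold_inl]
      · simp [height_inl]
    · obtain rfl : y = basisVec v := congrArg Subtype.val h2
      have hmh : (m : ℝ) * h ≤ m := by nlinarith
      have hmh0 : 0 ≤ (m : ℝ) * h := by positivity
      by_cases hle : (m : ℝ) * h ≤ 1
      · refine ⟨_, segment_subset_realization (attachPath_adj_zero hm)
          ⟨1 - m * h, m * h, by linarith, hmh0, by ring, rfl⟩, ?_, ?_⟩
        · simp only [map_add, map_smul, fold_inl, fold_inr, ← add_smul]; simp
        · simp [height_inl, height_inr]
      · -- The point lies between the vertices at heights `n` and `n + 1`.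
        obtain ⟨n, hn⟩ : ∃ n : ℕ, n + 1 = ⌈(m : ℝ) * h⌉₊ :=
          ⟨⌈(m : ℝ) * h⌉₊ - 1, Nat.sub_add_cancel (Nat.ceil_pos.2 (by linarith))⟩
        have hup : (m : ℝ) * h ≤ n + 1 := by
          have := Nat.le_ceil ((m : ℝ) * h)
          rw [← hn] at this; exact_mod_cast this
        have hlo : (n : ℝ) < m * h := Nat.lt_ceil.1 (by omega)
        have hnm : n + 1 ≤ m := by rw [hn]; exact Nat.ceil_le.2 hmh
        have hn1 : 1 ≤ n := by
          have : (0 : ℝ) < n := by linarith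
          exact_mod_cast this
        have hc : ((n - 1 : ℕ) : ℝ) = n - 1 := by push_cast [hn1]; ring
        refine ⟨_, segment_subset_realization (attachPath_adj_succ
          (i := ⟨n - 1, by omega⟩) (j := ⟨n, by omega⟩) (by simp; omega))
          ⟨n + 1 - m * h, m * h - n, by linarith, by linarith, by ring, rfl⟩, ?_, ?_⟩
        · simp only [map_add, map_smul, fold_inr, ← add_smul]
          ring_nf
          simp
        · simp only [map_add, map_smul, height_inr, hc, smul_eq_mul]
          ring
  have : CompactSpace (realization (attachPath Γ v m)) :=
    isCompact_iff_compactSpace.1 isCompact_realization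
  exact ⟨Continuous.homeoOfEquivCompactToT2 (f := Equiv.ofBijective F ⟨hinj, hsurj⟩) hF⟩

end AttachPath

/-- If `v` has degree `d ≥ 2` in the finite connected simple graph `Γ` and
`Γ'` is obtained from `Γ` by attaching a path of length `m ≥ 1` at `v`, then
`B₂(Γ') ≅ B₂(Γ) ∗ F_{d-1}`. -/
theorem braid2_attachPath_free_product
    (V : Type) [Fintype V] [DecidableEq V] (Γ : SimpleGraph V)
    (hconn : Γ.Connected) (v : V) (hdeg : 2 ≤ (Γ.neighborSet v).ncard)
    (m : ℕ) (hm : 1 ≤ m)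
    (x' : UConf 2 ↥(realization (attachPath Γ v m)))
    (x : UConf 2 ↥(realization Γ)) :
    Nonempty
      (FundamentalGroup (UConf 2 ↥(realization (attachPath Γ v m))) x' ≃*
        Monoid.Coprod (FundamentalGroup (UConf 2 ↥(realization Γ)) x)
          (FreeGroup (Fin ((Γ.neighborSet v).ncard - 1)))) := by
  obtain ⟨a, b, ha, hb, hab⟩ := (Set.one_lt_ncard_iff (Set.toFinite _)).1 (show 1 < _ from hdeg)
  have hva : Γ.Adj v a := ha
  let k₀ : Γ.neighborSet v := ⟨a, ha⟩
  have : Nontrivial (Γ.neighborSet v) := ⟨k₀, ⟨b, hb⟩, fun e => hab (congrArg Subtype.val e)⟩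
  have : PathConnectedSpace (realization Γ) :=
    isPathConnected_iff_pathConnectedSpace.1 (isPathConnected_realization hconn hva)
  obtain ⟨e⟩ := nonempty_homeo_whisker hva hm
  let E := uconfCongr 2 e
  obtain ⟨φ⟩ := nonempty_mulEquiv_whisker (vertexStar hva) k₀ (E x') x
  have hcard : Nat.card {k : Γ.neighborSet v // k ≠ k₀} = (Γ.neighborSet v).ncard - 1 := by
    rw [← Nat.card_coe_set_eq, Nat.card_eq_fintype_card, Nat.card_eq_fintype_card,
      Fintype.card_subtype_compl, Fintype.card_subtype_eq]
  let ε := Finite.equivFinOfCardEq hcard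
  let G := FundamentalGroupoidFunctor.equivOfHomotopyEquiv E.toHomotopyEquiv
  let ψ : FundamentalGroup _ x' ≃* FundamentalGroup _ (E x') :=
    G.fullyFaithfulFunctor.mulEquivEnd (FundamentalGroupoid.mk x')
  exact ⟨ψ.trans (φ.trans (MulEquiv.coprodCongr (MulEquiv.refl _) (FreeGroup.freeGroupCongr ε)))⟩

end GraphBraid
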